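/- arXiv:1704.07111 — 4 statements merged into one kernel-verified Lean document; each statement's English description precedes it below -/
import Mathlib

section
/- Let G be a connected graph and T ⊆ V(G). If G does not contain a T-join, then for every vertex u ∈ T, the graph G contains a (T \ {u})-join. -/
namespace SimpleGraph

variable {V : Type*}

/-- A `T`-join in `G`: a set `P` of (oriented) paths, pairwise edge-disjoint, each with two
distinct endpoints lying in `T`, such that every vertex of `T` is an endpoint of exactly one
path of `P`. -/
def IsTJoin (G : SimpleGraph V) (T : Set V) (P : Set (Σ u : V, Σ v : V, G.Walk u v)) : Prop :=
  (∀ p ∈ P, p.2.2.IsPath ∧ p.1 ≠ p.2.1 ∧ p.1 ∈ T ∧ p.2.1 ∈ T) ∧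
  (∀ p ∈ P, ∀ q ∈ P, p ≠ q → ∀ e ∈ p.2.2.edges, e ∉ q.2.2.edges) ∧
  (∀ t ∈ T, ∃! p, p ∈ P ∧ (p.1 = t ∨ p.2.1 = t))

/-- `G` contains a `T`-join. -/
def HasTJoin (G : SimpleGraph V) (T : Set V) : Prop := ∃ P, G.IsTJoin T P

end SimpleGraph

/-!
Pick a spanning tree of `G` rooted at `u` and order the vertices by ancestry, so that the vertices
above `w` form a subtree, attached to the rest by the single edge from `w` to its parent. It is
enough to find a matching `M` of `T \ {u}` such that for every `w` at most one vertex of `T \ {u}`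
above `w` is not matched to a vertex above `w`: then the tree paths joining matched pairs are
edge-disjoint. Taking `w` to be the root, at most one vertex is left over; if there is one, matching
it to `u` gives a `T`-join.

To find `M`, take by Zorn's lemma a maximal matching with the property that whenever a matched pair
leaves the subtree at `w`, everything else in that subtree is matched inside it. By maximality, any
two leftover vertices are separated by the subtree at some `w` above which there are at least two
leftover vertices. Let the anchor of a leftover vertex be its deepest ancestor of this kind.
Distinct leftover vertices have distinct anchors, and sending each of them to one with a next deeper
anchor decomposes the leftover vertices into infinite rays, along which they are matched in pairs.
-/

section TreeOrder

open Order

variable {V : Type*} [PartialOrder V] [PredOrder V]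

theorem sym2_mk_pred_injective : Function.Injective fun w : V ↦ s(w, pred w) := by
  intro v w h
  rcases Sym2.eq_iff.1 h with ⟨hvw, -⟩ | ⟨hvw, hwv⟩
  · exact hvw
  · exact le_antisymm (hvw ▸ pred_le w) (hwv ▸ pred_le v)

variable [IsPredArchimedean V]

theorem exists_isGreatest_inter_Iic {B : Set V} {t : V} (h : (B ∩ Set.Iic t).Nonempty) :
    ∃ a, IsGreatest (B ∩ Set.Iic t) a := by
  classical
  have hB : ∃ k, pred^[k] t ∈ B := by
    obtain ⟨w, hwB, hwt⟩ := h
    obtain ⟨k, rfl⟩ := hwt.exists_pred_iterate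
    exact ⟨k, hwB⟩
  refine ⟨pred^[Nat.find hB] t, ⟨Nat.find_spec hB, pred_iterate_le _ _⟩, ?_⟩
  rintro w ⟨hwB, hwt⟩
  obtain ⟨k, rfl⟩ := hwt.exists_pred_iterate
  exact Function.antitone_iterate_of_le_id pred_le (Nat.find_min' hB hwB) t

theorem exists_walk_of_le {G : SimpleGraph V} (hG : SimpleGraph.hasse V ≤ G) {c a : V}
    (hca : c ≤ a) :
    ∃ p : G.Walk c a, ∀ e ∈ p.edges, ∃ w, e = s(w, pred w) ∧ w ≤ a ∧ ¬ w ≤ c := by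
  induction hca using Pred.rec with
  | rfl => exact ⟨.nil, by simp⟩
  | pred c hca ih =>
    obtain ⟨p, hp⟩ := ih
    by_cases hc : IsMin c
    · rw [hc.pred_eq]
      exact ⟨p, hp⟩
    have hcov : pred c ⋖ c := pred_covBy_of_not_isMin hc
    refine ⟨.cons (hG (.inl hcov)) p, fun e he ↦ ?_⟩
    rcases List.mem_cons.1 (SimpleGraph.Walk.edges_cons _ _ ▸ he) with rfl | he
    · exact ⟨c, Sym2.eq_swap, hca, hcov.lt.not_ge⟩
    · obtain ⟨w, hw, hwa, hwc⟩ := hp e he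
      exact ⟨w, hw, hwa, fun h ↦ hwc (h.trans hcov.le)⟩

theorem exists_path_separating [OrderBot V] {G : SimpleGraph V} (hG : SimpleGraph.hasse V ≤ G)
    (a b : V) :
    ∃ p : G.Path a b, ∀ e ∈ (p : G.Walk a b).edges, ∃ w, e = s(w, pred w) ∧ ¬ (w ≤ a ↔ w ≤ b) := by
  classical
  obtain ⟨c, ⟨hca, hcb⟩, hc⟩ :=
    exists_isGreatest_inter_Iic (B := Set.Iic a) (t := b) ⟨⊥, bot_le, bot_le⟩
  obtain ⟨p, hp⟩ := exists_walk_of_le hG hca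
  obtain ⟨q, hq⟩ := exists_walk_of_le hG hcb
  refine ⟨(p.reverse.append q).toPath, fun e he ↦ ?_⟩
  have he' := SimpleGraph.Walk.edges_bypass_subset_edges _ he
  rw [SimpleGraph.Walk.edges_append, List.mem_append, SimpleGraph.Walk.edges_reverse,
    List.mem_reverse] at he'
  rcases he' with he | he
  · obtain ⟨w, hw, hwa, hwc⟩ := hp e he
    exact ⟨w, hw, fun h ↦ hwc (hc ⟨hwa, h.1 hwa⟩)⟩
  · obtain ⟨w, hw, hwb, hwc⟩ := hq e he
    exact ⟨w, hw, fun h ↦ hwc (hc ⟨h.2 hwb, hwb⟩)⟩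

end TreeOrder

section ParentFunction

theorem iterate_eq_self_or_lt {V : Type*} {f : V → V} {d : V → ℕ}
    (hf : ∀ v, f v = v ∨ d (f v) < d v) (k : ℕ) (v : V) : f^[k] v = v ∨ d (f^[k] v) < d v := by
  induction k with
  | zero => exact .inl rfl
  | succ k ih =>
    rw [Function.iterate_succ_apply']
    have := hf (f^[k] v)
    grind

/-- The ancestry order of a parent function `f` that fixes the roots and otherwise decreases the
depth `d`: the vertices below `v` are the iterated parents of `v`. -/
abbrev partialOrderOfParent {V : Type*} (f : V → V) (d : V → ℕ)
    (hf : ∀ v, f v = v ∨ d (f v) < d v) : PartialOrder V where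
  le a b := ∃ k, f^[k] b = a
  le_refl a := ⟨0, rfl⟩
  le_trans := by
    rintro _ _ c ⟨k, rfl⟩ ⟨l, rfl⟩
    exact ⟨k + l, Function.iterate_add_apply f k l c⟩
  le_antisymm := by
    rintro a b ⟨k, hk⟩ ⟨l, hl⟩
    have := iterate_eq_self_or_lt hf k b
    have := iterate_eq_self_or_lt hf l a
    grind

theorem exists_treeOrder_of_parent {V : Type*} {u : V} {f : V → V} {d : V → ℕ} (hu : f u = u)
    (hf : ∀ v, v ≠ u → d (f v) < d v) :
    ∃ (_ : PartialOrder V) (_ : OrderBot V) (_ : PredOrder V) (_ : WellFoundedLT V),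
      ⊥ = u ∧ ∀ v : V, Order.pred v = f v := by
  have hf' : ∀ v, f v = v ∨ d (f v) < d v := fun v ↦ by
    rcases eq_or_ne v u with rfl | hv
    exacts [.inl hu, .inr (hf v hv)]
  let _ : PartialOrder V := partialOrderOfParent f d hf'
  have lt_of_lt {a b : V} (hab : a < b) : d a < d b := by
    obtain ⟨k, rfl⟩ := hab.le
    exact (iterate_eq_self_or_lt hf' k b).resolve_left hab.ne
  have : WellFoundedLT V := ⟨Subrelation.wf lt_of_lt (measure d).wf⟩
  have parent_le (v : V) : f v ≤ v := ⟨1, rfl⟩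
  have u_le (v : V) : u ≤ v := by
    induction v using WellFoundedLT.induction with
    | ind v ih =>
      rcases eq_or_ne v u with rfl | hv
      · exact le_rfl
      exact (ih (f v) ((parent_le v).lt_of_ne fun h ↦ (hf v hv).ne (congrArg d h))).trans
        (parent_le v)
  let _ : OrderBot V := { bot := u, bot_le := u_le }
  let _ : PredOrder V :=
    { pred := f
      pred_le := parent_le
      min_of_le_pred := fun {v} hv ↦ by
        have hfv : f v = v := le_antisymm (parent_le v) hv
        rcases eq_or_ne v u with rfl | hvu
        · exact fun b _ ↦ u_le b
        · exact absurd (congrArg d hfv) (hf v hvu).ne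
      le_pred_of_lt := by
        rintro a b hab
        obtain ⟨_ | k, hk⟩ := hab.le
        · exact absurd hk hab.ne'
        · exact ⟨k, hk⟩ }
  exact ⟨_, ‹_›, ‹_›, ‹_›, rfl, fun _ ↦ rfl⟩

theorem exists_adj_dist_lt {V : Type*} {G : SimpleGraph V} (hG : G.Connected) {u v : V}
    (hv : v ≠ u) : ∃ w, G.Adj v w ∧ G.dist w u < G.dist v u := by
  obtain ⟨p, hp⟩ := hG.exists_walk_length_eq_dist v u
  cases p with
  | nil => exact absurd rfl hv
  | cons h q => exact ⟨_, h, hp ▸ Nat.lt_succ_of_le (SimpleGraph.dist_le q)⟩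

theorem exists_treeOrder_hasse_le {V : Type*} {G : SimpleGraph V} (hG : G.Connected) (u : V) :
    ∃ (_ : PartialOrder V) (_ : OrderBot V) (_ : PredOrder V) (_ : WellFoundedLT V),
      ⊥ = u ∧ SimpleGraph.hasse V ≤ G := by
  classical
  choose! parent hadj hlt using fun v (hv : v ≠ u) ↦ exists_adj_dist_lt hG hv
  obtain ⟨_, _, _, _, rfl, hpred⟩ :=
    exists_treeOrder_of_parent (u := u) (f := Function.update parent u u) (d := (G.dist · u))
      (Function.update_self ..) fun v hv ↦ by simpa [hv] using hlt v hv
  have adj_of_covBy {a b : V} (hab : a ⋖ b) : G.Adj b a := by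
    have hb : b ≠ ⊥ := (bot_le.trans_lt hab.lt).ne'
    rw [← hab.pred_eq, hpred, Function.update_of_ne hb]
    exact hadj b hb
  exact ⟨_, _, ‹_›, ‹_›, rfl, fun a b hab ↦ hab.elim (fun h ↦ (adj_of_covBy h).symm) adj_of_covBy⟩

end ParentFunction

section Matching

variable {V : Type*} {K : SimpleGraph V}

theorem isMatching_sSup_of_isChain {c : Set K.Subgraph} (hc : IsChain (· ≤ ·) c)
    (hM : ∀ M ∈ c, M.IsMatching) : (sSup c).IsMatching := by
  intro v hv
  rw [SimpleGraph.Subgraph.verts_sSup, Set.mem_iUnion₂] at hv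
  obtain ⟨M, hMc, hvM⟩ := hv
  obtain ⟨w, hvw, -⟩ := hM M hMc hvM
  refine ⟨w, SimpleGraph.Subgraph.sSup_adj.2 ⟨M, hMc, hvw⟩, fun x hvx ↦ ?_⟩
  obtain ⟨N, hNc, hvx⟩ := SimpleGraph.Subgraph.sSup_adj.1 hvx
  rcases hc.total hMc hNc with h | h
  · exact (hM N hNc).eq_of_adj_left hvx (h.2 hvw)
  · exact (hM M hMc).eq_of_adj_left (h.2 hvx) hvw

theorem isMatching_sup_subgraphOfAdj {M : K.Subgraph} (hM : M.IsMatching) {s t : V}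
    (hs : s ∉ M.verts) (ht : t ∉ M.verts) (hst : K.Adj s t) :
    (M ⊔ K.subgraphOfAdj hst).IsMatching := by
  have hst' := SimpleGraph.Subgraph.IsMatching.subgraphOfAdj hst
  refine hM.sup hst' ?_
  rw [hM.support_eq_verts, hst'.support_eq_verts]
  exact Set.disjoint_right.2 (by rintro x (rfl | rfl); exacts [hs, ht])

theorem exists_kernel {r : V → V → Prop} (hr : WellFounded r) :
    ∃ D : Set V, ∀ t, t ∈ D ↔ ∀ s, r s t → s ∉ D :=
  ⟨{t | hr.fix (fun t inD ↦ ∀ s, (h : r s t) → ¬ inD s h) t}, fun t ↦ by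
    rw [Set.mem_ofPred_eq, hr.fix_eq]
    rfl⟩

theorem exists_isMatching_of_injOn {f : V → V} {R : Set V} (hmaps : Set.MapsTo f R R)
    (hinj : Set.InjOn f R) (hwf : WellFounded fun s t ↦ s ∈ R ∧ f s = t) :
    ∃ M : (⊤ : SimpleGraph V).Subgraph, M.IsMatching ∧ M.verts = R ∧
      ∀ ⦃a b⦄, M.Adj a b → f a = b ∨ f b = a := by
  obtain ⟨D, hD⟩ := exists_kernel hwf
  have notMem_D {s : V} (hs : s ∈ R) (hsD : s ∈ D) : f s ∉ D := fun h ↦ (hD _).1 h s ⟨hs, rfl⟩ hsD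
  let E (a b : V) : Prop := a ∈ R ∧ a ∈ D ∧ f a = b
  let M : (⊤ : SimpleGraph V).Subgraph :=
    { verts := R
      Adj := fun a b ↦ E a b ∨ E b a
      adj_sub := by
        rintro a b (⟨haR, haD, rfl⟩ | ⟨hbR, hbD, rfl⟩) h
        · exact notMem_D haR haD (h.subst (motive := (· ∈ D)) haD)
        · exact notMem_D hbR hbD (h.symm.subst (motive := (· ∈ D)) hbD)
      edge_vert := by
        rintro a b (⟨haR, -, -⟩ | ⟨hbR, -, rfl⟩)
        exacts [haR, hmaps hbR]
      symm := ⟨fun a b h ↦ h.symm⟩ }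
  refine ⟨M, fun v hv ↦ ?_, rfl, fun a b h ↦ h.imp (·.2.2) (·.2.2)⟩
  by_cases hvD : v ∈ D
  · refine ⟨f v, .inl ⟨hv, hvD, rfl⟩, ?_⟩
    rintro w (⟨-, -, rfl⟩ | ⟨hwR, hwD, rfl⟩)
    exacts [rfl, absurd hvD (notMem_D hwR hwD)]
  · obtain ⟨s, ⟨hsR, rfl⟩, hsD⟩ : ∃ s, (s ∈ R ∧ f s = v) ∧ s ∈ D := by
      simpa only [hD v, not_forall, not_not, exists_prop] using hvD
    refine ⟨s, .inr ⟨hsR, hsD, rfl⟩, ?_⟩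
    rintro w (⟨-, hD', -⟩ | ⟨hwR, -, hw⟩)
    exacts [absurd hD' hvD, hinj hwR hsR hw]

theorem hasTJoin_verts_of_isMatching {G : SimpleGraph V} {M : K.Subgraph} (hM : M.IsMatching)
    (p : ∀ a b, G.Path a b)
    (hp : ∀ ⦃a b c d⦄, M.Adj a b → M.Adj c d → s(a, b) ≠ s(c, d) →
      (p a b : G.Walk a b).edges.Disjoint (p c d : G.Walk c d).edges) :
    G.HasTJoin M.verts := by
  -- `Quot.out` orients each matching edge, lest it contribute both a path and its reverse.
  let a (e : Sym2 V) : V := (Quot.out e).1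
  let b (e : Sym2 V) : V := (Quot.out e).2
  have mk_out (e : Sym2 V) : s(a e, b e) = e := Quot.out_eq e
  have adj_out {e : Sym2 V} (he : e ∈ M.edgeSet) : M.Adj (a e) (b e) := by rwa [← mk_out e] at he
  have mem_iff (e : Sym2 V) (t : V) : a e = t ∨ b e = t ↔ t ∈ e := by
    conv_rhs => rw [← mk_out e, Sym2.mem_iff]
    tauto
  let joined (e : Sym2 V) : Σ u v : V, G.Walk u v := ⟨a e, b e, p (a e) (b e)⟩
  refine ⟨joined '' M.edgeSet, ?_, ?_, fun t ht ↦ ?_⟩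
  · rintro _ ⟨e, he, rfl⟩
    have h := adj_out he
    exact ⟨(p _ _).2, h.ne, h.fst_mem, h.snd_mem⟩
  · rintro _ ⟨e, he, rfl⟩ _ ⟨e', he', rfl⟩ hne
    refine hp (adj_out he) (adj_out he') fun h ↦ hne ?_
    rw [mk_out, mk_out] at h
    rw [h]
  · obtain ⟨s, hts, hs⟩ := hM ht
    refine ⟨joined s(t, s), ⟨⟨_, hts, rfl⟩, (mem_iff _ _).2 (Sym2.mem_mk_left t s)⟩, ?_⟩
    rintro _ ⟨⟨e, he, rfl⟩, hte⟩
    obtain ⟨x, rfl⟩ := (mem_iff e t).1 hte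
    rw [hs x he]

end Matching

section Exposed

variable {V : Type*} [Preorder V] {K : SimpleGraph V} {M N : K.Subgraph} {R T : Set V}

/-- The vertices of `T` in the subtree above `w` that `M` does not match inside that subtree: those
from which a path of the prospective join has to leave the subtree, and those left over by `M`. -/
def exposed (M : K.Subgraph) (T : Set V) (w : V) : Set V :=
  {t ∈ T | w ≤ t ∧ ∀ s, M.Adj t s → ¬ w ≤ s}

/-- A partial matching of `T` is snug if, whenever a matched pair leaves the subtree above `w`, all
other vertices of `T` in that subtree are matched inside it. This is the condition for which Zorn's
lemma is applied; unlike "at most one vertex is exposed", it survives unions of chains and holds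
for the empty matching. -/
structure IsSnug (M : K.Subgraph) (T : Set V) : Prop where
  isMatching : M.IsMatching
  verts_subset : M.verts ⊆ T
  exposed_subset : ∀ ⦃w a b⦄, M.Adj a b → w ≤ a → ¬ w ≤ b → exposed M T w ⊆ {a}

/-- The vertices with at least two elements of `R` above them: the candidates for the anchors of the
elements of `R`. -/
def branching (R : Set V) : Set V := {w | (R ∩ Set.Ici w).Nontrivial}

/-- Any two elements of `R` are separated by the subtree above some branching vertex of `R`, as
holds for the vertices that a maximal snug matching leaves over. -/
def IsScattered (R : Set V) : Prop :=
  ∀ ⦃s⦄, s ∈ R → ∀ ⦃t⦄, t ∈ R → (∀ w ∈ branching R, w ≤ s ↔ w ≤ t) → s = t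

theorem exposed_subset (w : V) : exposed M T w ⊆ T ∩ Set.Ici w := fun _ ht ↦ ⟨ht.1, ht.2.1⟩

theorem exposed_anti (h : M ≤ N) (w : V) : exposed N T w ⊆ exposed M T w :=
  fun _ ht ↦ ⟨ht.1, ht.2.1, fun s hs ↦ ht.2.2 s (h.2 hs)⟩

theorem mem_exposed_of_notMem_verts {t w : V} (ht : t ∈ T \ M.verts) (hw : w ≤ t) :
    t ∈ exposed M T w :=
  ⟨ht.1, hw, fun _ hs ↦ absurd hs.fst_mem ht.2⟩

theorem exposed_bot [OrderBot V] (hM : M.IsMatching) : exposed M T ⊥ = T \ M.verts := by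
  refine Set.Subset.antisymm (fun t ht ↦ ⟨ht.1, fun htM ↦ ?_⟩)
    fun t ht ↦ mem_exposed_of_notMem_verts ht bot_le
  obtain ⟨s, hts, -⟩ := hM htM
  exact ht.2.2 s hts bot_le

theorem IsSnug.subsingleton_exposed_or_subset (hM : IsSnug M T) (w : V) :
    (exposed M T w).Subsingleton ∨ exposed M T w ⊆ T \ M.verts := by
  by_cases h : ∃ a b, M.Adj a b ∧ w ≤ a ∧ ¬ w ≤ b
  · obtain ⟨a, b, hab, hwa, hwb⟩ := h
    exact .inl (Set.subsingleton_singleton.anti (hM.exposed_subset hab hwa hwb))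
  · refine .inr fun t ht ↦ ⟨ht.1, fun htM ↦ h ?_⟩
    obtain ⟨s, hts, -⟩ := hM.isMatching htM
    exact ⟨t, s, hts, ht.2.1, ht.2.2 s hts⟩

theorem IsSnug.exposed_subset_of_le (hM : IsSnug M T) {w a : V} (ha : a ∈ T \ M.verts)
    (hwa : w ≤ a) : exposed M T w ⊆ T \ M.verts := by
  rcases hM.subsingleton_exposed_or_subset w with h | h
  · intro t ht
    rwa [h ht (mem_exposed_of_notMem_verts ha hwa)]
  · exact h

theorem isSnug_sSup_of_isChain {c : Set K.Subgraph} (hc : IsChain (· ≤ ·) c)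
    (hM : ∀ M ∈ c, IsSnug M T) : IsSnug (sSup c) T where
  isMatching := isMatching_sSup_of_isChain hc fun M hMc ↦ (hM M hMc).isMatching
  verts_subset := by
    rw [SimpleGraph.Subgraph.verts_sSup]
    exact Set.iUnion₂_subset fun M hMc ↦ (hM M hMc).verts_subset
  exposed_subset := by
    intro w a b hab hwa hwb
    obtain ⟨M, hMc, hab⟩ := SimpleGraph.Subgraph.sSup_adj.1 hab
    exact (exposed_anti (le_sSup hMc) w).trans ((hM M hMc).exposed_subset hab hwa hwb)

theorem exists_maximal_isSnug (K : SimpleGraph V) (T : Set V) :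
    ∃ M : K.Subgraph, Maximal (IsSnug · T) M :=
  zorn_le₀ {M : K.Subgraph | IsSnug M T} fun c hc hchain ↦
    ⟨sSup c, isSnug_sSup_of_isChain hchain hc, fun _ ↦ le_sSup⟩

theorem IsSnug.sup_subgraphOfAdj (hM : IsSnug M T) {s t : V} (hs : s ∈ T \ M.verts)
    (ht : t ∈ T \ M.verts) (hst : K.Adj s t)
    (hB : ∀ w ∈ branching (T \ M.verts), w ≤ s ↔ w ≤ t) :
    IsSnug (M ⊔ K.subgraphOfAdj hst) T where
  isMatching := isMatching_sup_subgraphOfAdj hM.isMatching hs.2 ht.2 hst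
  verts_subset := Set.union_subset hM.verts_subset (by rintro x (rfl | rfl); exacts [hs.1, ht.1])
  exposed_subset := by
    intro w a b hab hwa hwb
    refine (exposed_anti le_sup_left w).trans ?_
    rcases hab with hab | hab
    · exact hM.exposed_subset hab hwa hwb
    obtain ⟨ha, hw⟩ : a ∈ T \ M.verts ∧ w ∉ branching (T \ M.verts) := by
      rcases Sym2.eq_iff.1 hab with ⟨rfl, rfl⟩ | ⟨rfl, rfl⟩
      · exact ⟨hs, fun h ↦ hwb ((hB w h).1 hwa)⟩
      · exact ⟨ht, fun h ↦ hwb ((hB w h).2 hwa)⟩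
    exact fun x hx ↦ Set.not_nontrivial_iff.1 hw
      ⟨hM.exposed_subset_of_le ha hwa hx, hx.2.1⟩ ⟨ha, hwa⟩

theorem isScattered_of_maximal_isSnug {M : (⊤ : SimpleGraph V).Subgraph}
    (hM : Maximal (IsSnug · T) M) : IsScattered (T \ M.verts) := by
  intro s hs t ht hB
  by_contra hst
  have hle := hM.le_of_ge (hM.prop.sup_subgraphOfAdj hs ht hst hB) le_sup_left
  exact hs.2 (hle.1 (.inr (.inl rfl)))

theorem IsSnug.subsingleton_exposed_sup (hM : IsSnug M T) {w : V}
    (hN : (exposed N (T \ M.verts) w).Subsingleton) : (exposed (M ⊔ N) T w).Subsingleton := by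
  rcases hM.subsingleton_exposed_or_subset w with h | h
  · exact h.anti (exposed_anti le_sup_left w)
  · exact hN.anti fun t ht ↦
      ⟨h (exposed_anti le_sup_left w ht), ht.2.1, (exposed_anti le_sup_right w ht).2.2⟩

end Exposed

section RootedTree

variable {ι V : Type*} [PartialOrder V] [PredOrder V]

/-- Among the elements of `R` whose anchor `α` lies strictly above that of `s`, `t` has a minimal
anchor. Several `t` may be next after the same `s`, in different branches of the tree. -/
def IsNext (α : ι → V) (R : Set ι) (s t : ι) : Prop :=
  MinimalFor (fun r ↦ r ∈ R ∧ α s < α r) α t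

theorem IsNext.eq_of_lt_of_le [IsPredArchimedean V] {α : ι → V} {R : Set ι}
    (hα : Set.InjOn α R) {s s' t t' : ι} {w : V} (hs : s ∈ R) (hs' : s' ∈ R)
    (ht : IsNext α R s t) (ht' : IsNext α R s' t')
    (hsw : α s < w) (hwt : w ≤ α t) (hsw' : α s' < w) (hwt' : w ≤ α t') : s = s' := by
  refine hα hs hs' ?_
  rcases le_total_of_directed hsw.le hsw'.le with h | h
  · exact Eq.symm <| h.eq_of_not_lt fun hlt ↦
      (hsw.trans_le hwt').not_ge (ht'.2 ⟨hs, hlt⟩ (hsw.le.trans hwt'))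
  · exact h.eq_of_not_lt fun hlt ↦
      (hsw'.trans_le hwt).not_ge (ht.2 ⟨hs', hlt⟩ (hsw'.le.trans hwt))

theorem exists_isMatching_isNext [WellFoundedLT V] {α : ι → V} {R : Set ι}
    (hα : Set.InjOn α R) (hlt : ∀ s ∈ R, ∃ t ∈ R, α s < α t) :
    ∃ N : (⊤ : SimpleGraph ι).Subgraph, N.IsMatching ∧ N.verts = R ∧
      ∀ ⦃a b⦄, N.Adj a b → IsNext α R a b ∨ IsNext α R b a := by
  have exists_isNext (s : ι) (hs : s ∈ R) : ∃ t, IsNext α R s t :=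
    exists_minimalFor_of_wellFoundedLT _ _ (hlt s hs)
  choose! next isNext_next using exists_isNext
  have mem_next {s : ι} (hs : s ∈ R) : next s ∈ R := (isNext_next s hs).1.1
  have lt_next {s : ι} (hs : s ∈ R) : α s < α (next s) := (isNext_next s hs).1.2
  have next_inj : Set.InjOn next R := fun s hs t ht h ↦
    (isNext_next s hs).eq_of_lt_of_le hα hs ht (isNext_next t ht) (lt_next hs) le_rfl
      (h ▸ lt_next ht) (by rw [h])
  have wf_next : WellFounded fun s t ↦ s ∈ R ∧ next s = t :=
    Subrelation.wf (by rintro s _ ⟨hs, rfl⟩; exact lt_next hs) (InvImage.wf α wellFounded_lt)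
  obtain ⟨N, hN, rfl, hadj⟩ := exists_isMatching_of_injOn (fun _ ↦ mem_next) next_inj wf_next
  refine ⟨N, hN, rfl, fun a b hab ↦ ?_⟩
  rcases hadj hab with rfl | rfl
  · exact .inl (isNext_next a hab.fst_mem)
  · exact .inr (isNext_next b hab.snd_mem)

variable [OrderBot V]

theorem exists_anchor [IsPredArchimedean V] {B : Set V} (hB : ⊥ ∈ B) :
    ∃ α : V → V, (∀ t, α t ∈ B) ∧ ∀ w ∈ B, ∀ t, w ≤ α t ↔ w ≤ t := by
  choose α hα using fun t : V ↦ exists_isGreatest_inter_Iic (B := B) (t := t) ⟨⊥, hB, bot_le⟩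
  exact ⟨α, fun t ↦ (hα t).1.1,
    fun w hw t ↦ ⟨fun h ↦ h.trans (hα t).1.2, fun h ↦ (hα t).2 ⟨hw, h⟩⟩⟩

theorem IsScattered.exists_isMatching_of_nontrivial [WellFoundedLT V] {R : Set V}
    (hR : IsScattered R) (hnt : R.Nontrivial) :
    ∃ N : (⊤ : SimpleGraph V).Subgraph, N.IsMatching ∧ N.verts = R ∧
      ∀ w, (exposed N R w).Subsingleton := by
  obtain ⟨anchor, anchor_mem, le_anchor_iff⟩ :=
    exists_anchor (B := branching R) (hnt.mono fun t ht ↦ ⟨ht, bot_le⟩)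
  have anchor_le (t : V) : anchor t ≤ t := (le_anchor_iff _ (anchor_mem t) t).1 le_rfl
  have anchor_inj : Set.InjOn anchor R := fun s hs t ht h ↦
    hR hs ht fun w hw ↦ by rw [← le_anchor_iff w hw, h, le_anchor_iff w hw]
  have exists_anchor_lt (s : V) (hs : s ∈ R) : ∃ t ∈ R, anchor s < anchor t := by
    obtain ⟨t, ⟨ht, hst⟩, hne⟩ := (anchor_mem s).exists_ne s
    have hle : anchor s ≤ anchor t := (le_anchor_iff _ (anchor_mem s) t).2 hst
    exact ⟨t, ht, hle.lt_of_ne fun h ↦ hne (anchor_inj hs ht h).symm⟩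
  obtain ⟨N, hN, rfl, hadj⟩ := exists_isMatching_isNext anchor_inj exists_anchor_lt
  refine ⟨N, hN, rfl, fun w ↦ ?_⟩
  by_cases hw : w ∈ branching N.verts
  swap
  · exact (Set.not_nontrivial_iff.1 hw).anti (exposed_subset w)
  have exists_prev {a : V} (ha : a ∈ exposed N N.verts w) :
      ∃ s, N.Adj s a ∧ IsNext anchor N.verts s a ∧ anchor s < w ∧ w ≤ anchor a := by
    have hwa : w ≤ anchor a := (le_anchor_iff w hw a).2 ha.2.1
    obtain ⟨s, has, -⟩ := hN ha.1
    have hws : ¬ w ≤ anchor s := fun h ↦ ha.2.2 s has (h.trans (anchor_le s))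
    have hsa : IsNext anchor N.verts s a :=
      (hadj has).resolve_left fun h ↦ hws (hwa.trans h.1.2.le)
    exact ⟨s, has.symm, hsa, (lt_or_le_of_directed hsa.1.2.le hwa).resolve_right hws, hwa⟩
  intro a ha b hb
  obtain ⟨s, hsa, hnext, hsw, hwa⟩ := exists_prev ha
  obtain ⟨t, htb, hnext', htw, hwb⟩ := exists_prev hb
  obtain rfl := hnext.eq_of_lt_of_le anchor_inj hsa.fst_mem htb.fst_mem hnext' hsw hwa htw hwb
  exact hN.eq_of_adj_left hsa htb

theorem IsScattered.exists_isMatching [WellFoundedLT V] {R : Set V} (hR : IsScattered R) :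
    ∃ N : (⊤ : SimpleGraph V).Subgraph, N.IsMatching ∧ N.verts ⊆ R ∧
      ∀ w, (exposed N R w).Subsingleton := by
  rcases R.subsingleton_or_nontrivial with h | h
  · exact ⟨⊥, fun _ hv ↦ hv.elim, Set.empty_subset R, fun w ↦ h.anti fun t ht ↦ ht.1⟩
  · obtain ⟨N, hN, hNR, hexp⟩ := hR.exists_isMatching_of_nontrivial h
    exact ⟨N, hN, hNR.subset, hexp⟩

theorem exists_isMatching_subsingleton_exposed [WellFoundedLT V] (T : Set V) :
    ∃ M : (⊤ : SimpleGraph V).Subgraph, M.IsMatching ∧ M.verts ⊆ T ∧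
      ∀ w, (exposed M T w).Subsingleton := by
  obtain ⟨M, hmax⟩ := exists_maximal_isSnug ⊤ T
  have hM := hmax.prop
  obtain ⟨N, hN, hNR, hexp⟩ := (isScattered_of_maximal_isSnug hmax).exists_isMatching
  refine ⟨M ⊔ N, hM.isMatching.sup hN ?_,
    Set.union_subset hM.verts_subset (hNR.trans Set.sdiff_subset),
    fun w ↦ hM.subsingleton_exposed_sup (hexp w)⟩
  rw [hM.isMatching.support_eq_verts, hN.support_eq_verts]
  exact Set.disjoint_right.2 fun x hx ↦ (hNR hx).2

theorem hasTJoin_verts_of_subsingleton_exposed [IsPredArchimedean V] {G K : SimpleGraph V}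
    (hG : SimpleGraph.hasse V ≤ G) {M : K.Subgraph} (hM : M.IsMatching)
    (hexp : ∀ w, (exposed M M.verts w).Subsingleton) : G.HasTJoin M.verts := by
  have exists_mem_exposed {a b w : V} (hab : M.Adj a b) (hw : ¬ (w ≤ a ↔ w ≤ b)) :
      ∃ x ∈ exposed M M.verts w, ∃ y, M.Adj x y ∧ s(a, b) = s(x, y) := by
    have mem {x y : V} (hxy : M.Adj x y) (hx : w ≤ x) (hy : ¬ w ≤ y) : x ∈ exposed M M.verts w :=
      ⟨hxy.fst_mem, hx, fun z hz ↦ hM.eq_of_adj_left hxy hz ▸ hy⟩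
    by_cases ha : w ≤ a
    · exact ⟨a, mem hab ha fun hb ↦ hw (iff_of_true ha hb), b, hab, rfl⟩
    · have hb : w ≤ b := not_not.1 fun hb ↦ hw (iff_of_false ha hb)
      exact ⟨b, mem hab.symm hb ha, a, hab.symm, Sym2.eq_swap⟩
  choose p hp using exists_path_separating hG
  refine hasTJoin_verts_of_isMatching hM p fun a b c d hab hcd hne e he he' ↦ hne ?_
  obtain ⟨w, rfl, hw⟩ := hp a b e he
  obtain ⟨w', hww', hw'⟩ := hp c d _ he'
  obtain rfl := sym2_mk_pred_injective hww'
  obtain ⟨x, hx, y, hxy, hab_eq⟩ := exists_mem_exposed hab hw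
  obtain ⟨x', hx', y', hxy', hcd_eq⟩ := exists_mem_exposed hcd hw'
  obtain rfl := hexp w hx hx'
  rw [hab_eq, hcd_eq, hM.eq_of_adj_left hxy hxy']

theorem hasTJoin_or_hasTJoin_insert_bot [WellFoundedLT V] {G : SimpleGraph V}
    (hG : SimpleGraph.hasse V ≤ G) {T : Set V} (hT : ⊥ ∉ T) :
    G.HasTJoin T ∨ G.HasTJoin (insert ⊥ T) := by
  obtain ⟨M, hM, hMT, hexp⟩ := exists_isMatching_subsingleton_exposed T
  rcases (T \ M.verts).eq_empty_or_nonempty with hempty | ⟨t, ht⟩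
  · have hverts : M.verts = T := hMT.antisymm (Set.sdiff_eq_empty.1 hempty)
    rw [← hverts] at hexp ⊢
    exact .inl (hasTJoin_verts_of_subsingleton_exposed hG hM hexp)
  have hleft : (T \ M.verts).Subsingleton := exposed_bot hM ▸ hexp ⊥
  have ht_bot : (⊤ : SimpleGraph V).Adj t ⊥ := fun h ↦ hT (h ▸ ht.1)
  have hM' := isMatching_sup_subgraphOfAdj hM ht.2 (fun h ↦ hT (hMT h)) ht_bot
  set M' := M ⊔ (⊤ : SimpleGraph V).subgraphOfAdj ht_bot
  have hverts : M'.verts = insert ⊥ T := by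
    have : M.verts ∪ {t} = T := by
      rw [← hleft.eq_singleton_of_mem ht, Set.union_sdiff_cancel hMT]
    rw [← this, ← Set.union_insert, Set.pair_comm]
    rfl
  rw [← hverts]
  refine .inr (hasTJoin_verts_of_subsingleton_exposed hG hM' fun w ↦ ?_)
  rcases eq_or_ne w ⊥ with rfl | hw
  · rw [exposed_bot hM', Set.sdiff_self]
    exact Set.subsingleton_empty
  · refine (hexp w).anti fun x hx ↦ ⟨?_, hx.2.1, (exposed_anti le_sup_left w hx).2.2⟩
    exact (hverts ▸ hx.1).resolve_left fun h ↦ hw (le_bot_iff.1 (h ▸ hx.2.1))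

end RootedTree

/-- If a connected graph `G` has no `T`-join, then it has a `(T \ {u})`-join for every
vertex `u ∈ T`. -/
theorem hasTJoin_diff_of_not_hasTJoin {V : Type*} (G : SimpleGraph V) (hG : G.Connected)
    (T : Set V) (hT : ¬ G.HasTJoin T) (u : V) (hu : u ∈ T) :
    G.HasTJoin (T \ {u}) := by
  obtain ⟨_, _, _, _, rfl, hle⟩ := exists_treeOrder_hasse_le hG u
  have hbot : ⊥ ∉ T \ {⊥} := fun h ↦ h.2 rfl
  refine (hasTJoin_or_hasTJoin_insert_bot hle hbot).resolve_right fun h ↦ hT ?_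
  rwa [Set.insert_sdiff_singleton, Set.insert_eq_of_mem hu] at h
end

section
/- Let G be a connected graph and T, T' ⊆ V(G) with T △ T' finite of odd cardinality. If G does not contain a T-join, then G contains a T'-join. -/
/-!
Fix a breadth-first spanning tree of `G` with its tree order, and pair up vertices of `T` so that
above each vertex `x` at most one vertex of `T` has no partner above `x`. Then the edge from `x` to
its parent lies on at most one of the tree paths joining partners, so that `T`, possibly after the
removal of one vertex, has a join.

To find the pairing, let `N` be the set of the vertices above which no pairing does this. Pairings
above the minimal vertices outside `N` combine into a single one, and its unpaired vertices with the
same set of ancestors in `N` can be paired off as well. Above each vertex of `N` there still are two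
unpaired vertices, which now differ in their largest ancestor in `N`. So these ancestors form a set
without maximal elements; joining each of its elements to a minimal larger one splits it into
ascending rays, along which consecutive elements are paired.

Changing `T` by a finite set `X` of even size affects only the finitely many paths of a join that
meet a finite connected subgraph `K` containing `X` in an end or an edge: replace them by a join of
the symmetric difference of `X` with the set of their ends inside the union of `K` and these paths,
which exists as removing one vertex from a finite set changes its parity.
-/

namespace TJoin

open Set SimpleGraph

/-! ### Partial pairings -/

section Pairing

variable {α β : Type*} {T : Set α} {m σ : α → α}

/-- `m` encodes a partial pairing of the elements of `T`: paired elements are exchanged by the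
involution `m`, whose fixed points are the elements outside `T` and the unpaired elements of `T`. -/
def IsPairing (T : Set α) (m : α → α) : Prop :=
  m.Involutive ∧ ∀ t ∉ T, m t = t

/-- The elements of `T` that the pairing `m` leaves without a partner. -/
def unpaired (T : Set α) (m : α → α) : Set α := {t ∈ T | m t = t}

theorem IsPairing.mono {U : Set α} (hm : IsPairing U m) (hUT : U ⊆ T) : IsPairing T m :=
  ⟨hm.1, fun t ht => hm.2 t fun h => ht (hUT h)⟩

theorem IsPairing.apply_mem (hm : IsPairing T m) {t : α} (ht : t ∈ T) : m t ∈ T := by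
  by_contra h
  have hfix : m t = t := hm.1.injective (hm.2 _ h)
  exact h (hfix.symm ▸ ht)

theorem IsPairing.comp_apply_of_ne (hm : IsPairing T m) (hσ : IsPairing (unpaired T m) σ) {t : α}
    (ht : m t ≠ t) : σ (m t) = m t :=
  hσ.2 _ fun h => ht (hm.1.injective h.2)

theorem IsPairing.comp (hm : IsPairing T m) (hσ : IsPairing (unpaired T m) σ) :
    IsPairing T (σ ∘ m) := by
  refine ⟨fun t => ?_, fun t ht => ?_⟩
  · by_cases hfix : m t = t
    · have : m (σ t) = σ t := by
        by_cases ht : t ∈ T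
        · exact (hσ.apply_mem ⟨ht, hfix⟩).2
        · rw [hσ.2 t fun h => ht h.1, hfix]
      simp only [Function.comp_apply, hfix, this, hσ.1 t]
    · simp only [Function.comp_apply, hm.comp_apply_of_ne hσ hfix, hm.1 t]
      exact hσ.2 t fun h => hfix h.2
  · simp only [Function.comp_apply, hm.2 t ht]
    exact hσ.2 t fun h => ht h.1

theorem IsPairing.unpaired_comp (hm : IsPairing T m) (hσ : IsPairing (unpaired T m) σ) :
    unpaired T (σ ∘ m) = unpaired (unpaired T m) σ := by
  ext t
  by_cases hfix : m t = t
  · simp [unpaired, hfix]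
  · simp [unpaired, hfix, hm.comp_apply_of_ne hσ hfix]

theorem exists_isPairing_of_injOn {A : Set α} {g : α → α} (hg : InjOn g A)
    (hA : Disjoint A (g '' A)) :
    ∃ σ, IsPairing (A ∪ g '' A) σ ∧ ∀ a ∈ A, σ a = g a ∧ σ (g a) = a := by
  classical
  let σ t := if t ∈ A then g t else if h : t ∈ g '' A then h.choose else t
  have hσ : ∀ a ∈ A, σ a = g a ∧ σ (g a) = a := fun a ha => by
    have hmem : g a ∈ g '' A := mem_image_of_mem g ha
    have hna : g a ∉ A := Set.disjoint_right.1 hA hmem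
    refine ⟨if_pos ha, ?_⟩
    simp only [σ, if_neg hna, dif_pos hmem]
    exact hg hmem.choose_spec.1 ha hmem.choose_spec.2
  have hout : ∀ t ∉ A ∪ g '' A, σ t = t := fun t ht => by
    rw [mem_union, not_or] at ht
    simp only [σ, if_neg ht.1, dif_neg ht.2]
  refine ⟨σ, ⟨fun t => ?_, hout⟩, hσ⟩
  by_cases ht : t ∈ A ∪ g '' A
  · obtain ht | ⟨a, ha, rfl⟩ := ht
    · rw [(hσ t ht).1, (hσ t ht).2]
    · rw [(hσ a ha).2, (hσ a ha).1]
  · rw [hout t ht, hout t ht]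

theorem exists_kernel {r : α → α → Prop} (hr : WellFounded r) :
    ∃ K : Set α, ∀ v, v ∈ K ↔ ∀ u, r u v → u ∉ K := by
  refine ⟨{v | hr.fix (fun v ih => ∀ u, ∀ h : r u v, ¬ ih u h) v}, fun v => ?_⟩
  rw [mem_ofPred_eq, hr.fix_eq]
  rfl

theorem exists_isPairing_of_mapsTo {S : Set α} {g : α → α} (hmaps : MapsTo g S S)
    (hinj : InjOn g S) (hwf : WellFounded fun u v => u ∈ S ∧ g u = v) :
    ∃ σ, IsPairing S σ ∧ ∀ s ∈ S, σ s = g s ∨ g (σ s) = s := by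
  obtain ⟨K, hK⟩ := exists_kernel hwf
  have hdisj : Disjoint (S ∩ K) (g '' (S ∩ K)) := by
    rw [Set.disjoint_right]
    rintro _ ⟨u, hu, rfl⟩ hgu
    exact (hK _).1 hgu.2 u ⟨hu.1, rfl⟩ hu.2
  have hcover : S ⊆ (S ∩ K) ∪ g '' (S ∩ K) := fun v hv => by
    by_cases hvK : v ∈ K
    · exact .inl ⟨hv, hvK⟩
    · rw [hK] at hvK
      push Not at hvK
      obtain ⟨u, ⟨hu, huv⟩, huK⟩ := hvK
      exact .inr ⟨u, ⟨hu, huK⟩, huv⟩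
  have hunion : (S ∩ K) ∪ g '' (S ∩ K) = S :=
    (union_subset inter_subset_left (hmaps.mono_left inter_subset_left).image_subset).antisymm
      hcover
  obtain ⟨σ, hσ, hσK⟩ := exists_isPairing_of_injOn (hinj.mono inter_subset_left) hdisj
  refine ⟨σ, hunion ▸ hσ, fun s hs => ?_⟩
  obtain hs | ⟨u, hu, rfl⟩ := hcover hs
  · exact .inl (hσK s hs).1
  · exact .inr (congrArg g (hσK u hu).2)

theorem IsPairing.exists_of_image {U : Set α} {p : α → β} (hp : InjOn p U) {σ : β → β}
    (hσ : IsPairing (p '' U) σ) : ∃ τ, IsPairing U τ ∧ ∀ t ∈ U, p (τ t) = σ (p t) := by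
  classical
  have hlift : ∀ t : α, ∃ u, (t ∈ U → u ∈ U ∧ p u = σ (p t)) ∧ (t ∉ U → u = t) := fun t => by
    by_cases ht : t ∈ U
    · obtain ⟨u, hu, hut⟩ := hσ.apply_mem (mem_image_of_mem p ht)
      exact ⟨u, fun _ => ⟨hu, hut⟩, fun h => absurd ht h⟩
    · exact ⟨t, fun h => absurd h ht, fun _ => rfl⟩
  choose τ hτ hout using hlift
  refine ⟨τ, ⟨fun t => ?_, hout⟩, fun t ht => (hτ t ht).2⟩
  by_cases ht : t ∈ U
  · have hmem := (hτ t ht).1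
    refine hp (hτ _ hmem).1 ht ?_
    rw [(hτ _ hmem).2, (hτ t ht).2, hσ.1]
  · rw [hout t ht, hout t ht]

theorem exists_involutive_subsingleton_fixedPoints (α : Type*) :
    ∃ σ : α → α, σ.Involutive ∧ (Function.fixedPoints σ).Subsingleton := by
  cases finite_or_infinite α
  · obtain ⟨n, ⟨e⟩⟩ := Finite.exists_equiv_fin α
    refine ⟨fun a => e.symm (e a).rev, fun a => by simp, fun a ha b hb => e.injective ?_⟩
    have ha' : (e a).rev = e a := (e.symm_apply_eq).1 ha
    have hb' : (e b).rev = e b := (e.symm_apply_eq).1 hb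
    simp only [Fin.ext_iff, Fin.val_rev] at ha' hb' ⊢
    omega
  · have hcard : Cardinal.mk α = Cardinal.mk (α × Bool) := by
      have htwo : (2 : Cardinal) ≤ Cardinal.mk α :=
        (Cardinal.natCast_lt_aleph0 (n := 2)).le.trans (Cardinal.aleph0_le_mk α)
      simp [Cardinal.mul_eq_left (Cardinal.aleph0_le_mk α) htwo two_ne_zero]
    obtain ⟨e⟩ := Cardinal.eq.1 hcard
    refine ⟨fun a => e.symm ((e a).1, !(e a).2), fun a => by simp, fun a ha => ?_⟩
    have : ((e a).1, !(e a).2) = e a := (e.symm_apply_eq).1 ha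
    simpa using congrArg Prod.snd this

theorem exists_isPairing_subsingleton_unpaired (U : Set α) :
    ∃ σ, IsPairing U σ ∧ (unpaired U σ).Subsingleton := by
  classical
  obtain ⟨σ, hσ, hfix⟩ := exists_involutive_subsingleton_fixedPoints U
  have happ : ∀ t : U, Equiv.Perm.ofSubtype hσ.toPerm (t : α) = σ t := fun t => by
    simp [Equiv.Perm.ofSubtype_apply_coe]
  have hout : ∀ t ∉ U, Equiv.Perm.ofSubtype hσ.toPerm t = t := fun t =>
    Equiv.Perm.ofSubtype_apply_of_not_mem _
  refine ⟨Equiv.Perm.ofSubtype hσ.toPerm, ⟨fun t => ?_, hout⟩, ?_⟩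
  · by_cases ht : t ∈ U
    · rw [happ ⟨t, ht⟩, happ, hσ]
    · rw [hout t ht, hout t ht]
  · rintro t ⟨ht, htfix⟩ u ⟨hu, hufix⟩
    rw [happ ⟨t, ht⟩] at htfix
    rw [happ ⟨u, hu⟩] at hufix
    exact congrArg Subtype.val (hfix (Subtype.ext htfix) (Subtype.ext hufix))

theorem exists_isPairing_injOn_unpaired (U : Set α) (π : α → β) :
    ∃ σ, IsPairing U σ ∧ (∀ t, π (σ t) = π t) ∧ InjOn π (unpaired U σ) := by
  choose σ hσ hfix using fun b => exists_isPairing_subsingleton_unpaired {t ∈ U | π t = b}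
  have hπ : ∀ t, π (σ (π t) t) = π t := fun t => by
    by_cases ht : t ∈ U
    · exact ((hσ (π t)).apply_mem ⟨ht, rfl⟩).2
    · rw [(hσ (π t)).2 t fun h => ht h.1]
  refine ⟨fun t => σ (π t) t, ⟨fun t => ?_, fun t ht => ?_⟩, hπ, ?_⟩
  · simp only [hπ, (hσ (π t)).1 t]
  · exact (hσ (π t)).2 t fun h => ht h.1
  · rintro t ⟨ht, htfix⟩ u ⟨hu, hufix⟩ htu
    refine hfix (π u) ⟨⟨ht, htu⟩, ?_⟩ ⟨⟨hu, rfl⟩, hufix⟩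
    rwa [← htu]

end Pairing

/-! ### Pairings in rooted forests -/

/-- The tree order of a rooted forest of height at most `ω`, roots at the bottom: the elements
below any given one form a finite chain. -/
class IsForestOrder (α : Type*) [PartialOrder α] : Prop where
  finite_Iic : ∀ a : α, (Iic a).Finite
  le_total_of_le : ∀ {a b c : α}, a ≤ c → b ≤ c → a ≤ b ∨ b ≤ a

/-- The elements of `T` above `x` that the pairing `m` does not pair with an element above `x`.
When `m` pairs the vertices of a tree, the paths of the tree joining partners use the edge from `x`
down to its parent once for every paired element of `unmatchedIn T m x`. -/
def unmatchedIn {α : Type*} [LE α] (T : Set α) (m : α → α) (x : α) : Set α :=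
  {t ∈ T | x ≤ t ∧ (x ≤ m t → m t = t)}

section Forest

variable {α : Type*} [PartialOrder α] {T N : Set α} {m σ : α → α}

theorem IsPairing.unmatchedIn_comp_subset (hm : IsPairing T m) (hσ : IsPairing (unpaired T m) σ)
    (x : α) : unmatchedIn T (σ ∘ m) x ⊆ unmatchedIn T m x := by
  rintro t ⟨ht, hxt, hσt⟩
  refine ⟨ht, hxt, fun hxm => ?_⟩
  by_contra hne
  have hσm := hm.comp_apply_of_ne hσ hne
  rw [Function.comp_apply, hσm] at hσt
  exact hne (hσt hxm)

variable [IsForestOrder α]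

theorem IsForestOrder.lt_or_le_of_le {a b c : α} (ha : a ≤ c) (hb : b ≤ c) : a < b ∨ b ≤ a := by
  rcases IsForestOrder.le_total_of_le ha hb with h | h
  · exact h.lt_or_eq.imp id Eq.ge
  · exact .inr h

instance IsForestOrder.wellFoundedLT : WellFoundedLT α := by
  refine ⟨Subrelation.wf (fun {a b} h => ?_) (measure fun a : α => (Iic a).ncard).wf⟩
  exact ncard_lt_ncard (Iic_ssubset_Iic.2 h) (IsForestOrder.finite_Iic b)

theorem IsForestOrder.exists_isGreatest {s : Set α} {t : α} (hs : s.Nonempty) (hst : s ⊆ Iic t) :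
    ∃ a, IsGreatest s a := by
  obtain ⟨a, ha⟩ := ((IsForestOrder.finite_Iic t).subset hst).exists_maximal hs
  refine ⟨a, ha.prop, fun b hb => ?_⟩
  exact (IsForestOrder.le_total_of_le (hst hb) (hst ha.prop)).elim id (ha.le_of_ge hb)

theorem exists_isPairing_of_isAntichain {C : Set α} (hC : IsAntichain (· ≤ ·) C)
    (hgood : ∀ c ∈ C, ∃ m, IsPairing T m ∧ ∀ x, c ≤ x → (unmatchedIn T m x).Subsingleton) :
    ∃ m, IsPairing T m ∧ (∀ c ∈ C, ∀ x, c ≤ x → (unmatchedIn T m x).Subsingleton) ∧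
      ∀ t, m t ≠ t → ∃ c ∈ C, c ≤ t ∧ c ≤ m t := by
  classical
  choose! m hm hmgood using hgood
  have huniq {c d t : α} (hc : c ∈ C) (hd : d ∈ C) (hct : c ≤ t) (hdt : d ≤ t) : c = d :=
    (IsForestOrder.le_total_of_le hct hdt).elim (hC.eq hc hd) fun h => (hC.eq hd hc h).symm
  let μ t := if h : ∃ c ∈ C, c ≤ t ∧ c ≤ m c t then m h.choose t else t
  have hμ {c t : α} (hc : c ∈ C) (hct : c ≤ t) (hcm : c ≤ m c t) : μ t = m c t := by
    have h : ∃ c ∈ C, c ≤ t ∧ c ≤ m c t := ⟨c, hc, hct, hcm⟩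
    have heq : h.choose = c := huniq h.choose_spec.1 hc h.choose_spec.2.1 hct
    simp only [μ, dif_pos h, heq]
  have hμ' {t : α} (h : ¬∃ c ∈ C, c ≤ t ∧ c ≤ m c t) : μ t = t := dif_neg h
  refine ⟨μ, ⟨fun t => ?_, fun t ht => ?_⟩, fun c hc x hcx => ?_, fun t ht => ?_⟩
  · by_cases h : ∃ c ∈ C, c ≤ t ∧ c ≤ m c t
    · obtain ⟨c, hc, hct, hcm⟩ := h
      have hinv : m c (m c t) = t := (hm c hc).1 t
      rw [hμ hc hct hcm, hμ hc hcm (hinv.symm ▸ hct), hinv]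
    · rw [hμ' h, hμ' h]
  · by_cases h : ∃ c ∈ C, c ≤ t ∧ c ≤ m c t
    · obtain ⟨c, hc, hct, hcm⟩ := h
      rw [hμ hc hct hcm, (hm c hc).2 t ht]
    · exact hμ' h
  · refine (hmgood c hc x hcx).anti fun t ⟨ht, hxt, hfix⟩ => ⟨ht, hxt, fun hxm => ?_⟩
    rw [hμ hc (hcx.trans hxt) (hcx.trans hxm)] at hfix
    exact hfix hxm
  · by_cases h : ∃ c ∈ C, c ≤ t ∧ c ≤ m c t
    · obtain ⟨c, hc, hct, hcm⟩ := h
      exact ⟨c, hc, hct, (hμ hc hct hcm).symm ▸ hcm⟩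
    · exact absurd (hμ' h) ht

theorem exists_pairwiseDisjoint_Ioc {S : Set α} (hS : ∀ s ∈ S, ∃ u ∈ S, s < u) :
    ∃ g : α → α, (∀ s ∈ S, g s ∈ S ∧ s < g s) ∧ S.PairwiseDisjoint fun s => Ioc s (g s) := by
  choose! g hg hmin using fun s hs =>
    wellFounded_lt.has_min {u ∈ S | s < u} (hS s hs)
  refine ⟨g, hg, fun s hs u hu hne => ?_⟩
  rw [Function.onFun, Set.disjoint_left]
  rintro x ⟨hsx, hxs⟩ ⟨hux, hxu⟩
  rcases IsForestOrder.le_total_of_le hsx.le hux.le with h | h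
  · exact hmin s hs u ⟨hu, h.lt_of_ne hne⟩ (hux.trans_le hxs)
  · exact hmin u hu s ⟨hs, h.lt_of_ne' hne⟩ (hsx.trans_le hxu)

theorem exists_isPairing_of_no_maximal {S : Set α} (hS : ∀ s ∈ S, ∃ u ∈ S, s < u) :
    ∃ σ, IsPairing S σ ∧ ∀ x, (unmatchedIn S σ x).Subsingleton := by
  obtain ⟨g, hg, hdisj⟩ := exists_pairwiseDisjoint_Ioc hS
  have hinj : InjOn g S := fun s hs u hu h =>
    hdisj.elim_set hs hu (g s) ⟨(hg s hs).2, le_rfl⟩ ⟨h ▸ (hg u hu).2, h.le⟩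
  obtain ⟨σ, hσ, hσg⟩ := exists_isPairing_of_mapsTo (fun s hs => (hg s hs).1) hinj
    (Subrelation.wf (fun {u v} h => h.2 ▸ (hg u h.1).2) wellFounded_lt)
  have hne : ∀ s ∈ S, σ s ≠ s := fun s hs hfix => by
    have hgs : g s = s := (hσg s hs).elim (fun h => h.symm.trans hfix) fun h => by rwa [hfix] at h
    exact (hg s hs).2.ne' hgs
  -- Only the upper ends of the intervals `Ioc s (g s)` formed by partners can be unmatched.
  have hIoc : ∀ x, ∀ s ∈ unmatchedIn S σ x, σ s ∈ S ∧ x ∈ Ioc (σ s) (g (σ s)) := by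
    rintro x s ⟨hs, hxs, hfix⟩
    have hxσ : ¬ x ≤ σ s := fun h => hne s hs (hfix h)
    obtain h | h := hσg s hs
    · exact absurd (hxs.trans (h ▸ (hg s hs).2.le)) hxσ
    · have hσs : σ s < s := (hg (σ s) (hσ.apply_mem hs)).2.trans_eq h
      exact ⟨hσ.apply_mem hs,
        (IsForestOrder.lt_or_le_of_le hσs.le hxs).resolve_right hxσ, hxs.trans h.ge⟩
  refine ⟨σ, hσ, fun x s hs t ht => hσ.1.injective ?_⟩
  exact hdisj.elim_set (hIoc x s hs).1 (hIoc x t ht).1 x (hIoc x s hs).2 (hIoc x t ht).2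

theorem exists_isPairing_inter_Iic_eq (hN : IsLowerSet N)
    (hgood : ∀ c ∉ N, ∃ m, IsPairing T m ∧ ∀ x, c ≤ x → (unmatchedIn T m x).Subsingleton) :
    ∃ m, IsPairing T m ∧ (∀ x ∉ N, (unmatchedIn T m x).Subsingleton) ∧
      ∀ t, N ∩ Iic (m t) = N ∩ Iic t := by
  obtain ⟨m, hm, hmgood, hmove⟩ := exists_isPairing_of_isAntichain
    (setOfPred_minimal_antichain (· ∉ N)) fun c hc => hgood c hc.1
  refine ⟨m, hm, fun x hx => ?_, fun t => ?_⟩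
  · obtain ⟨c, hcx, hc⟩ := exists_minimal_le_of_wellFoundedLT (· ∉ N) x hx
    exact hmgood c hc x hcx
  · by_cases hfix : m t = t
    · rw [hfix]
    obtain ⟨c, hc, hct, hcm⟩ := hmove t hfix
    have hle {s u : α} (hcs : c ≤ s) (hcu : c ≤ u) : N ∩ Iic s ⊆ N ∩ Iic u := fun y ⟨hy, hys⟩ =>
      ⟨hy, (IsForestOrder.le_total_of_le hys hcs).elim (·.trans hcu)
        fun hcy => absurd (hN hcy hy) hc.1⟩
    exact (hle hcm hct).antisymm (hle hct hcm)

theorem exists_isPairing_injOn_inter_Iic (hN : IsLowerSet N)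
    (hgood : ∀ c ∉ N, ∃ m, IsPairing T m ∧ ∀ x, c ≤ x → (unmatchedIn T m x).Subsingleton) :
    ∃ m, IsPairing T m ∧ (∀ x ∉ N, (unmatchedIn T m x).Subsingleton) ∧
      (∀ t, N ∩ Iic (m t) = N ∩ Iic t) ∧ InjOn (fun t => N ∩ Iic t) (unpaired T m) := by
  obtain ⟨m, hm, hmgood, htrace⟩ := exists_isPairing_inter_Iic_eq hN hgood
  obtain ⟨σ, hσ, hσtrace, hinj⟩ :=
    exists_isPairing_injOn_unpaired (unpaired T m) fun t => N ∩ Iic t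
  exact ⟨σ ∘ m, hm.comp hσ, fun x hx => (hmgood x hx).anti (hm.unmatchedIn_comp_subset hσ x),
    fun t => (hσtrace (m t)).trans (htrace t), hm.unpaired_comp hσ ▸ hinj⟩

theorem exists_injOn_le_iff_le {S : Set α} (hinj : InjOn (fun t => N ∩ Iic t) S) :
    ∃ p : α → α, InjOn p {t ∈ S | (N ∩ Iic t).Nonempty} ∧
      ∀ t, (N ∩ Iic t).Nonempty → p t ∈ N ∧ ∀ x ∈ N, (x ≤ p t ↔ x ≤ t) := by
  choose! p hp using fun t (ht : (N ∩ Iic t).Nonempty) =>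
    IsForestOrder.exists_isGreatest ht inter_subset_right
  have hle : ∀ t, (N ∩ Iic t).Nonempty → ∀ x ∈ N, (x ≤ p t ↔ x ≤ t) := fun t ht x hx =>
    ⟨fun h => h.trans (hp t ht).1.2, fun h => (hp t ht).2 ⟨hx, h⟩⟩
  refine ⟨p, fun t ht u hu htu => hinj ht.1 hu.1 ?_, fun t ht => ⟨(hp t ht).1.1, hle t ht⟩⟩
  ext x
  simp only [mem_inter_iff, mem_Iic, and_congr_right_iff]
  intro hx
  rw [← hle t ht.2 x hx, ← hle u hu.2 x hx, htu]

/-- The case of interest is that `p t` is the largest element of `N` below `t`: then the elements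
of `U` are paired according to these positions. -/
theorem IsPairing.exists_of_no_maximal_image {U : Set α} {p : α → α} (hm : IsPairing T m)
    (hmgood : ∀ x ∉ N, (unmatchedIn T m x).Subsingleton) (hU : U ⊆ unpaired T m)
    (hunm : ∀ x ∈ N, unmatchedIn T m x ⊆ U) (hpinj : InjOn p U)
    (hp : ∀ t ∈ U, ∀ x ∈ N, (x ≤ p t ↔ x ≤ t)) (hnomax : ∀ t ∈ U, ∃ u ∈ U, p t < p u) :
    ∃ m, IsPairing T m ∧ ∀ x, (unmatchedIn T m x).Subsingleton := by
  obtain ⟨σ, hσ, hσgood⟩ := exists_isPairing_of_no_maximal (S := p '' U) <| by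
    simpa only [forall_mem_image, exists_mem_image] using hnomax
  obtain ⟨τ, hτ, hτσ⟩ := hσ.exists_of_image hpinj
  have hτm : IsPairing (unpaired T m) τ := hτ.mono hU
  have hsub := hm.unmatchedIn_comp_subset hτm
  refine ⟨τ ∘ m, hm.comp hτm, fun x => ?_⟩
  by_cases hx : x ∈ N
  · have hmaps : MapsTo p (unmatchedIn T (τ ∘ m) x) (unmatchedIn (p '' U) σ x) := fun t ht => by
      have htU : t ∈ U := hunm x hx (hsub x ht)
      refine ⟨mem_image_of_mem p htU, (hp t htU x hx).2 ht.2.1, fun hxσ => ?_⟩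
      rw [← hτσ t htU, hp _ (hτ.apply_mem htU) x hx] at hxσ
      have hfix : τ (m t) = t := ht.2.2 <| by rwa [Function.comp_apply, (hU htU).2]
      rw [← hτσ t htU, ← (hU htU).2, hfix, (hU htU).2]
    exact fun t ht u hu => hpinj (hunm x hx (hsub x ht)) (hunm x hx (hsub x hu))
      (hσgood x (hmaps ht) (hmaps hu))
  · exact (hmgood x hx).anti (hsub x)

theorem IsPairing.exists_of_injOn_inter_Iic (hm : IsPairing T m)
    (hmgood : ∀ x ∉ N, (unmatchedIn T m x).Subsingleton)
    (htrace : ∀ t, N ∩ Iic (m t) = N ∩ Iic t)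
    (hinj : InjOn (fun t => N ∩ Iic t) (unpaired T m))
    (hbad : ∀ v ∈ N, ∃ x, v ≤ x ∧ ¬ (unmatchedIn T m x).Subsingleton) :
    ∃ m, IsPairing T m ∧ ∀ x, (unmatchedIn T m x).Subsingleton := by
  obtain ⟨p, hpinj, hp⟩ := exists_injOn_le_iff_le hinj
  have hunm : ∀ x ∈ N, unmatchedIn T m x ⊆ {t ∈ unpaired T m | (N ∩ Iic t).Nonempty} := by
    rintro x hx t ⟨ht, hxt, hfix⟩
    have hxm : x ∈ N ∩ Iic (m t) := (htrace t).symm ▸ ⟨hx, hxt⟩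
    exact ⟨⟨ht, hfix hxm.2⟩, x, hx, hxt⟩
  refine hm.exists_of_no_maximal_image hmgood (sep_subset _ _) hunm hpinj
    (fun t ht => (hp t ht.2).2) fun s hs => ?_
  obtain ⟨x, hsx, hx⟩ := hbad (p s) (hp s hs.2).1
  have hxN : x ∈ N := not_imp_comm.1 (hmgood x) hx
  by_contra! hmax
  have heq : ∀ t ∈ unmatchedIn T m x, p t = p s := fun t ht => by
    have htU := hunm x hxN ht
    exact (eq_of_le_of_not_lt (hsx.trans (((hp t htU.2).2 x hxN).2 ht.2.1)) (hmax t htU)).symm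
  exact hx fun t ht u hu =>
    hpinj (hunm x hxN ht) (hunm x hxN hu) ((heq t ht).trans (heq u hu).symm)

theorem exists_isPairing_subsingleton_unmatchedIn (T : Set α) :
    ∃ m, IsPairing T m ∧ ∀ x, (unmatchedIn T m x).Subsingleton := by
  let N := {v | ¬∃ m, IsPairing T m ∧ ∀ x, v ≤ x → (unmatchedIn T m x).Subsingleton}
  have hN : IsLowerSet N := fun v w hwv hv ⟨m, hm, hmgood⟩ =>
    hv ⟨m, hm, fun x hvx => hmgood x (hwv.trans hvx)⟩
  obtain ⟨m, hm, hmgood, htrace, hinj⟩ :=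
    exists_isPairing_injOn_inter_Iic hN fun c hc => not_not.1 hc
  refine hm.exists_of_injOn_inter_Iic hmgood htrace hinj fun v hv => ?_
  by_contra! h
  exact hv ⟨m, hm, h⟩

end Forest

/-! ### Pairings along a spanning tree -/

theorem exists_partialOrder_isForestOrder {α : Type*} {r : α → α → Prop} (hwf : WellFounded r)
    (huniq : Relator.LeftUnique r) :
    ∃ _ : PartialOrder α, IsForestOrder α ∧ (∀ a b, r a b → a ≤ b) ∧ ∀ a b, a ⋖ b → r a b := by
  have hirrefl {a b : α} (h : Relation.ReflTransGen r a b) (h' : Relation.ReflTransGen r b a) :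
      a = b := by
    rcases Relation.reflTransGen_iff_eq_or_transGen.1 h with h | h
    · exact h.symm
    · exact absurd (h.trans_left h') (hwf.transGen.irrefl.irrefl a)
  let _ : PartialOrder α :=
    { le := Relation.ReflTransGen r
      le_refl := fun _ => .refl
      le_trans := fun _ _ _ => .trans
      le_antisymm := fun _ _ => hirrefl }
  have hle {a b : α} (h : r a b) : a ≤ b := .single h
  refine ⟨inferInstance, ⟨fun b => ?_, fun {a b c} hac hbc => ?_⟩, fun _ _ => hle,
    fun a b hab => ?_⟩
  · induction b using hwf.induction with
    | _ b ih =>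
      by_cases hb : ∃ c, r c b
      · obtain ⟨c, hcb⟩ := hb
        refine ((ih c hcb).insert b).subset fun a hab => ?_
        obtain rfl | ⟨d, had, hdb⟩ := Relation.ReflTransGen.cases_tail hab
        exacts [.inl rfl, .inr (huniq hcb hdb ▸ had)]
      · refine (finite_singleton b).subset fun a hab => ?_
        obtain rfl | ⟨d, -, hdb⟩ := Relation.ReflTransGen.cases_tail hab
        exacts [rfl, absurd ⟨d, hdb⟩ hb]
  · exact ((Relation.ReflTransGen.total_of_right_unique huniq.flip
      (Relation.reflTransGen_swap.2 hac) (Relation.reflTransGen_swap.2 hbc)).imp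
        Relation.reflTransGen_swap.1 Relation.reflTransGen_swap.1).symm
  · obtain rfl | ⟨c, hac, hcb⟩ := Relation.ReflTransGen.cases_tail hab.le
    · exact absurd rfl hab.ne
    · have hlt : c < b := (hle hcb).lt_of_ne fun h => hwf.irrefl.irrefl b (h ▸ hcb)
      rwa [(show a ≤ c from hac).eq_of_not_lt fun h => hab.2 h hlt]

section SpanningTree

variable {V : Type*} {G : SimpleGraph V}

theorem exists_adj_dist_add_one_eq (hG : G.Connected) {r x : V} (hx : x ≠ r) :
    ∃ y, G.Adj y x ∧ G.dist r y + 1 = G.dist r x := by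
  obtain ⟨w, hw⟩ := hG.exists_walk_length_eq_dist x r
  cases w with
  | nil => exact absurd rfl hx
  | @cons _ y _ hadj w =>
    refine ⟨y, hadj.symm, ?_⟩
    have hy : G.dist y r ≤ w.length := dist_le w
    have hxy : G.dist x r ≤ G.dist x y + G.dist y r := hG.dist_triangle
    rw [dist_eq_one_iff_adj.2 hadj] at hxy
    rw [Walk.length_cons] at hw
    rw [dist_comm, dist_comm (u := r)]
    omega

/-- The order is that of a breadth-first spanning tree. -/
theorem exists_partialOrder_isForestOrder_of_connected (hG : G.Connected) :
    ∃ _ : PartialOrder V,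
      IsForestOrder V ∧ (∃ r : V, ∀ x, r ≤ x) ∧ ∀ x y : V, y ⋖ x → G.Adj y x := by
  obtain ⟨r⟩ := hG.nonempty
  choose! parent hadj hdist using fun (x : V) (hx : x ≠ r) => exists_adj_dist_add_one_eq hG hx
  have hwf : WellFounded fun y x => x ≠ r ∧ parent x = y :=
    Subrelation.wf (fun {y x} ⟨hx, hy⟩ => by
      subst hy; exact Nat.lt_of_succ_le (hdist x hx).le) (measure (G.dist r)).wf
  obtain ⟨_, hforest, hle, hcov⟩ := exists_partialOrder_isForestOrder hwf
    fun a b c hac hbc => hac.2.symm.trans hbc.2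
  refine ⟨_, hforest, ⟨r, fun x => ?_⟩, fun x y hyx => ?_⟩
  · induction x using hwf.induction with
    | _ x ih =>
      by_cases hx : x = r
      · exact hx.ge
      · exact (ih (parent x) ⟨hx, rfl⟩).trans (hle _ _ ⟨hx, rfl⟩)
  · obtain ⟨hx, rfl⟩ := hcov y x hyx
    exact hadj x hx

section ForestWalk

variable [PartialOrder V] [IsForestOrder V] (hcov : ∀ x y : V, y ⋖ x → G.Adj y x)
include hcov

theorem exists_walk_of_le {z t : V} (hzt : z ≤ t) :
    ∃ w : G.Walk t z, ∀ e ∈ w.edges, ∃ x y, y ⋖ x ∧ e = s(x, y) ∧ z < x ∧ x ≤ t := by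
  induction t using wellFounded_lt.induction (r := ((· < ·) : V → V → Prop)) with
  | _ t ih =>
    obtain rfl | hlt := hzt.eq_or_lt
    · exact ⟨.nil, by simp⟩
    obtain ⟨y, hy⟩ : ∃ y, IsGreatest (Ico z t) y :=
      IsForestOrder.exists_isGreatest ⟨z, le_rfl, hlt⟩ fun y hy => hy.2.le
    have hyt : y ⋖ t := ⟨hy.1.2, fun x hyx hxt => hyx.not_ge (hy.2 ⟨hy.1.1.trans hyx.le, hxt⟩)⟩
    obtain ⟨w, hw⟩ := ih y hyt.lt hy.1.1
    refine ⟨.cons (hcov t y hyt).symm w, fun e he => ?_⟩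
    rw [Walk.edges_cons, List.mem_cons] at he
    obtain rfl | he := he
    · exact ⟨t, y, hyt, rfl, hlt, le_rfl⟩
    · obtain ⟨x, x', hx, rfl, hzx, hxy⟩ := hw e he
      exact ⟨x, x', hx, rfl, hzx, hxy.trans hyt.le⟩

theorem exists_walk_edges_xor {r t u : V} (hrt : r ≤ t) (hru : r ≤ u) :
    ∃ w : G.Walk t u, ∀ e ∈ w.edges, ∃ x y, y ⋖ x ∧ e = s(x, y) ∧ Xor (x ≤ t) (x ≤ u) := by
  obtain ⟨z, ⟨hzt, hzu⟩, hz⟩ : ∃ z, IsGreatest (Iic t ∩ Iic u) z :=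
    IsForestOrder.exists_isGreatest ⟨r, hrt, hru⟩ inter_subset_left
  obtain ⟨w, hw⟩ := exists_walk_of_le hcov hzt
  obtain ⟨w', hw'⟩ := exists_walk_of_le hcov hzu
  refine ⟨w.append w'.reverse, fun e he => ?_⟩
  rw [Walk.edges_append, List.mem_append, Walk.edges_reverse, List.mem_reverse] at he
  obtain he | he := he
  · obtain ⟨x, y, hyx, rfl, hzx, hxt⟩ := hw e he
    exact ⟨x, y, hyx, rfl, .inl ⟨hxt, fun hxu => (hz ⟨hxt, hxu⟩).not_gt hzx⟩⟩
  · obtain ⟨x, y, hyx, rfl, hzx, hxu⟩ := hw' e he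
    exact ⟨x, y, hyx, rfl, .inr ⟨hxu, fun hxt => (hz ⟨hxt, hxu⟩).not_gt hzx⟩⟩

end ForestWalk

theorem hasTJoin_of_involutive {m : V → V} (hm : m.Involutive) (w : ∀ t, G.Walk t (m t))
    (hdisj : ∀ t u, ∀ e ∈ (w t).edges, e ∈ (w u).edges → u = t ∨ u = m t) :
    G.HasTJoin {t | m t ≠ t} := by
  classical
  let _ : LinearOrder V := linearOrderOfSTO WellOrderingRel
  have hne {t u : V} (ht : t < m t) (hu : u < m u) : u ≠ m t := by
    rintro rfl
    exact ht.not_gt (by rwa [hm t] at hu)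
  refine ⟨{p | ∃ t, t < m t ∧ p = ⟨t, m t, (w t).bypass⟩}, ?_, ?_, fun t ht => ?_⟩
  · rintro _ ⟨t, ht, rfl⟩
    exact ⟨Walk.bypass_isPath _, ht.ne, ht.ne', by simpa [hm t] using ht.ne⟩
  · rintro _ ⟨t, ht, rfl⟩ _ ⟨u, hu, rfl⟩ hpq e het heu
    obtain rfl | h :=
      hdisj t u e (Walk.edges_bypass_subset_edges _ het) (Walk.edges_bypass_subset_edges _ heu)
    · exact hpq rfl
    · exact hne ht hu h
  · obtain ⟨u, hu, hut⟩ : ∃ u, u < m u ∧ (u = t ∨ m u = t) := by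
      obtain h | h := lt_or_gt_of_ne ht
      · exact ⟨m t, by rwa [hm t], .inr (hm t)⟩
      · exact ⟨t, h, .inl rfl⟩
    refine ⟨_, ⟨⟨u, hu, rfl⟩, hut⟩, ?_⟩
    rintro _ ⟨⟨v, hv, rfl⟩, hvt⟩
    suffices v = u by rw [this]
    dsimp only at hvt
    obtain rfl | rfl := hut <;> obtain h | h := hvt
    · exact h
    · exact absurd h.symm (hne hv hu)
    · exact absurd h (hne hu hv)
    · exact hm.injective h

theorem exists_hasTJoin_subsingleton_diff (hG : G.Connected) (T : Set V) :
    ∃ T₁ ⊆ T, (T \ T₁).Subsingleton ∧ G.HasTJoin T₁ := by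
  obtain ⟨_, _, ⟨r, hr⟩, hcov⟩ := exists_partialOrder_isForestOrder_of_connected hG
  obtain ⟨m, hm, hgood⟩ := exists_isPairing_subsingleton_unmatchedIn T
  choose w hw using fun t => exists_walk_edges_xor hcov (hr t) (hr (m t))
  have hunm {t x : V} (hx : Xor (x ≤ t) (x ≤ m t)) :
      t ∈ unmatchedIn T m x ∨ m t ∈ unmatchedIn T m x := by
    have ht : t ∈ T := by
      by_contra ht
      rw [hm.2 t ht, xor_self] at hx
      exact hx
    obtain ⟨hxt, hxm⟩ | ⟨hxm, hxt⟩ := hx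
    · exact .inl ⟨ht, hxt, fun h => absurd h hxm⟩
    · exact .inr ⟨hm.apply_mem ht, hxm, fun h => absurd (hm.1 t ▸ h) hxt⟩
  refine ⟨{t | m t ≠ t}, fun t ht => not_imp_comm.1 (hm.2 t) ht, ?_,
    hasTJoin_of_involutive hm.1 w fun t u e het heu => ?_⟩
  · exact (hgood r).anti fun t ⟨ht, hfix⟩ => ⟨ht, hr t, fun _ => not_not.1 hfix⟩
  · obtain ⟨x, y, hyx, rfl, hxt⟩ := hw t e het
    obtain ⟨x', y', hyx', heq, hxu⟩ := hw u _ heu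
    obtain rfl : x = x' := by
      obtain ⟨rfl, -⟩ | ⟨rfl, rfl⟩ := Sym2.eq_iff.1 heq
      exacts [rfl, absurd hyx.lt hyx'.lt.asymm]
    obtain ht | ht := hunm hxt <;> obtain hu | hu := hunm hxu
    · exact .inl (hgood x hu ht)
    · exact .inr (hm.1.eq_iff.1 (hgood x hu ht))
    · exact .inr (hgood x hu ht)
    · exact .inl (hm.1.injective (hgood x hu ht))

theorem hasTJoin_or_exists_hasTJoin_symmDiff_singleton (hG : G.Connected) (T : Set V) :
    G.HasTJoin T ∨ ∃ v, G.HasTJoin (symmDiff T {v}) := by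
  obtain ⟨T₁, hT₁, hdiff, hjoin⟩ := exists_hasTJoin_subsingleton_diff hG T
  obtain hempty | ⟨v, hv⟩ := hdiff.eq_empty_or_singleton
  · exact .inl (hT₁.antisymm (Set.sdiff_eq_empty.1 hempty) ▸ hjoin)
  · refine .inr ⟨v, ?_⟩
    rwa [← hv, ← symmDiff_of_ge hT₁, symmDiff_symmDiff_cancel_left]

end SpanningTree

/-! ### Changing a join on a finite set -/

section LocalChange

variable {V W : Type*} {G : SimpleGraph V} {T T' X : Set V}
  {P P' P₀ : Set (Σ u : V, Σ v : V, G.Walk u v)}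

/-- The set of all ends of the walks in `P`. -/
def endpoints (P : Set (Σ u : V, Σ v : V, G.Walk u v)) : Set V :=
  {t | ∃ p ∈ P, p.1 = t ∨ p.2.1 = t}

theorem endpoints_mono (h : P₀ ⊆ P) : endpoints P₀ ⊆ endpoints P :=
  fun _ ⟨p, hp, ht⟩ => ⟨p, h hp, ht⟩

theorem endpoints_eq_union (P : Set (Σ u : V, Σ v : V, G.Walk u v)) :
    endpoints P = (fun p => p.1) '' P ∪ (fun p => p.2.1) '' P := by
  ext t
  simp only [endpoints, mem_ofPred_eq, mem_union, mem_image, ← exists_or, ← and_or_left]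

section IsTJoin

variable (hP : G.IsTJoin T P)
include hP

theorem endpoints_eq_of_isTJoin : endpoints P = T := by
  refine subset_antisymm ?_ fun t ht => (hP.2.2 t ht).exists
  rintro _ ⟨p, hp, rfl | rfl⟩
  exacts [(hP.1 p hp).2.2.1, (hP.1 p hp).2.2.2]

theorem eq_of_common_end {p q : Σ u : V, Σ v : V, G.Walk u v} {t : V} (hp : p ∈ P) (hq : q ∈ P)
    (hpt : p.1 = t ∨ p.2.1 = t) (hqt : q.1 = t ∨ q.2.1 = t) : p = q :=
  (hP.2.2 t (endpoints_eq_of_isTJoin hP ▸ ⟨p, hp, hpt⟩)).unique ⟨hp, hpt⟩ ⟨hq, hqt⟩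

theorem isTJoin_endpoints_of_subset (h : P₀ ⊆ P) : G.IsTJoin (endpoints P₀) P₀ := by
  refine ⟨fun p hp => ?_, fun p hp q hq => hP.2.1 p (h hp) q (h hq), ?_⟩
  · exact ⟨(hP.1 p (h hp)).1, (hP.1 p (h hp)).2.1, ⟨p, hp, .inl rfl⟩, ⟨p, hp, .inr rfl⟩⟩
  · rintro t ⟨p, hp, hpt⟩
    exact ⟨p, ⟨hp, hpt⟩, fun q ⟨hq, hqt⟩ => eq_of_common_end hP (h hq) (h hp) hqt hpt⟩

theorem endpoints_diff_of_isTJoin (h : P₀ ⊆ P) : endpoints (P \ P₀) = T \ endpoints P₀ := by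
  rw [← endpoints_eq_of_isTJoin hP]
  ext t
  refine ⟨fun ⟨p, hp, hpt⟩ => ⟨⟨p, hp.1, hpt⟩, fun ⟨q, hq, hqt⟩ => hp.2 ?_⟩,
    fun ⟨⟨p, hp, hpt⟩, ht⟩ => ⟨p, ⟨hp, fun hp₀ => ht ⟨p, hp₀, hpt⟩⟩, hpt⟩⟩
  rwa [eq_of_common_end hP hp.1 (h hq) hpt hqt]

theorem even_ncard_of_isTJoin (hT : T.Finite) : Even T.ncard := by
  have hfst : InjOn (fun p => p.1) P := fun p hp q hq h =>
    eq_of_common_end hP hp hq (.inl rfl) (.inl h.symm)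
  have hsnd : InjOn (fun p => p.2.1) P := fun p hp q hq h =>
    eq_of_common_end hP hp hq (.inr rfl) (.inr h.symm)
  have hdisj : Disjoint ((fun p => p.1) '' P) ((fun p => p.2.1) '' P) := by
    rw [Set.disjoint_left]
    rintro _ ⟨p, hp, rfl⟩ ⟨q, hq, h⟩
    obtain rfl := eq_of_common_end hP hp hq (.inl rfl) (.inr h)
    exact (hP.1 p hp).2.1 h.symm
  rw [← endpoints_eq_of_isTJoin hP, endpoints_eq_union] at hT ⊢
  rw [ncard_union_eq hdisj (hT.subset subset_union_left) (hT.subset subset_union_right),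
    hfst.ncard_image, hsnd.ncard_image]
  exact ⟨_, rfl⟩

theorem finite_setOf_end_mem_or_edge_mem {A : Set V} {E : Set (Sym2 V)} (hA : A.Finite)
    (hE : E.Finite) :
    {p ∈ P | (p.1 ∈ A ∨ p.2.1 ∈ A) ∨ ∃ e ∈ p.2.2.edges, e ∈ E}.Finite := by
  have hends : ∀ t ∈ A, {p ∈ P | p.1 = t ∨ p.2.1 = t}.Finite := fun t _ =>
    Subsingleton.finite fun p hp q hq => eq_of_common_end hP hp.1 hq.1 hp.2 hq.2
  have hedges : ∀ e ∈ E, {p ∈ P | e ∈ p.2.2.edges}.Finite := fun e _ =>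
    Subsingleton.finite fun p hp q hq =>
      not_imp_comm.1 (hP.2.1 p hp.1 q hq.1) fun h => h e hp.2 hq.2
  refine ((hA.biUnion hends).union (hE.biUnion hedges)).subset ?_
  rintro p ⟨hp, (h | h) | ⟨e, he, heE⟩⟩
  · exact .inl (mem_biUnion h ⟨hp, .inl rfl⟩)
  · exact .inl (mem_biUnion h ⟨hp, .inr rfl⟩)
  · exact .inr (mem_biUnion heE ⟨hp, he⟩)

theorem isTJoin_union (hP' : G.IsTJoin T' P') (hT : Disjoint T T')
    (hedges : ∀ p ∈ P, ∀ q ∈ P', ∀ e ∈ p.2.2.edges, e ∉ q.2.2.edges) :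
    G.IsTJoin (T ∪ T') (P ∪ P') := by
  refine ⟨?_, ?_, ?_⟩
  · rintro p (hp | hp)
    · obtain ⟨hpath, hne, h₁, h₂⟩ := hP.1 p hp
      exact ⟨hpath, hne, .inl h₁, .inl h₂⟩
    · obtain ⟨hpath, hne, h₁, h₂⟩ := hP'.1 p hp
      exact ⟨hpath, hne, .inr h₁, .inr h₂⟩
  · rintro p (hp | hp) q (hq | hq) hpq
    · exact hP.2.1 p hp q hq hpq
    · exact hedges p hp q hq
    · exact fun e hep heq => hedges q hq p hp e heq hep
    · exact hP'.2.1 p hp q hq hpq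
  · have hnot : ∀ p ∈ P, ∀ q ∈ P', ∀ t, (p.1 = t ∨ p.2.1 = t) → ¬ (q.1 = t ∨ q.2.1 = t) :=
      fun p hp q hq t hpt hqt => by
        rw [← endpoints_eq_of_isTJoin hP, ← endpoints_eq_of_isTJoin hP'] at hT
        exact Set.disjoint_left.1 hT ⟨p, hp, hpt⟩ ⟨q, hq, hqt⟩
    rintro t (ht | ht)
    · obtain ⟨p, ⟨hp, hpt⟩, huniq⟩ := hP.2.2 t ht
      refine ⟨p, ⟨.inl hp, hpt⟩, ?_⟩
      rintro q ⟨hq | hq, hqt⟩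
      exacts [huniq q ⟨hq, hqt⟩, absurd hqt (hnot p hp q hq t hpt)]
    · obtain ⟨p, ⟨hp, hpt⟩, huniq⟩ := hP'.2.2 t ht
      refine ⟨p, ⟨.inr hp, hpt⟩, ?_⟩
      rintro q ⟨hq | hq, hqt⟩
      exacts [absurd hpt (hnot q hq p hp t hqt), huniq q ⟨hq, hqt⟩]

theorem isTJoin_map {G' : SimpleGraph W} (f : G →g G') (hf : Function.Injective f) :
    G'.IsTJoin (f '' T) ((fun p => ⟨f p.1, f p.2.1, p.2.2.map f⟩) '' P) := by
  refine ⟨?_, ?_, ?_⟩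
  · rintro _ ⟨p, hp, rfl⟩
    obtain ⟨hpath, hne, h₁, h₂⟩ := hP.1 p hp
    exact ⟨hpath.map hf, hf.ne hne, mem_image_of_mem f h₁,
      mem_image_of_mem f h₂⟩
  · rintro _ ⟨p, hp, rfl⟩ _ ⟨q, hq, rfl⟩ hpq e hep heq
    rw [Walk.edges_map, List.mem_map] at hep heq
    obtain ⟨e, he, rfl⟩ := hep
    obtain ⟨e', he', hee'⟩ := heq
    obtain rfl := Sym2.map.injective hf hee'
    exact hP.2.1 p hp q hq (fun h => hpq (h ▸ rfl)) e' he he'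
  · rintro _ ⟨t, ht, rfl⟩
    obtain ⟨p, ⟨hp, hpt⟩, -⟩ := hP.2.2 t ht
    refine ⟨_, ⟨mem_image_of_mem _ hp, hpt.imp (congrArg f) (congrArg f)⟩, ?_⟩
    rintro _ ⟨⟨q, hq, rfl⟩, hqt⟩
    rw [eq_of_common_end hP hq hp (hqt.imp (@hf _ _) (@hf _ _)) hpt]

end IsTJoin

theorem even_ncard_symmDiff {α : Type*} {A B : Set α} (hA : A.Finite) (hB : B.Finite) :
    Even (symmDiff A B).ncard ↔ (Even A.ncard ↔ Even B.ncard) := by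
  have hAB := ncard_inter_add_ncard_sdiff_eq_ncard A B hA
  have hBA := ncard_inter_add_ncard_sdiff_eq_ncard B A hB
  rw [inter_comm] at hBA
  rw [Set.symmDiff_def, ncard_union_eq disjoint_sdiff_sdiff (hA.sdiff) (hB.sdiff)]
  grind

theorem hasTJoin_of_finite_of_even (hG : G.Connected) (hT : T.Finite) (heven : Even T.ncard) :
    G.HasTJoin T := by
  refine (hasTJoin_or_exists_hasTJoin_symmDiff_singleton hG T).resolve_right ?_
  rintro ⟨v, P, hP⟩
  have h := even_ncard_of_isTJoin hP (hT.symmDiff (finite_singleton v))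
  rw [even_ncard_symmDiff hT (finite_singleton v), ncard_singleton] at h
  exact Nat.not_even_one (h.1 heven)

theorem exists_isTJoin_edges_subset {H : G.Subgraph} (hH : H.Connected) (hX : X.Finite)
    (heven : Even X.ncard) (hXH : X ⊆ H.verts) :
    ∃ P, G.IsTJoin X P ∧ ∀ p ∈ P, ∀ e ∈ p.2.2.edges, e ∈ H.edgeSet := by
  have hval : ((↑) : H.verts → V) '' ((↑) ⁻¹' X) = X := by
    rw [Subtype.image_preimage_coe, inter_eq_right.2 hXH]
  obtain ⟨P, hP⟩ := hasTJoin_of_finite_of_even hH.coe (T := ((↑) : H.verts → V) ⁻¹' X)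
    (hX.preimage Subtype.val_injective.injOn)
    (by rwa [← ncard_image_of_injective _ Subtype.val_injective, hval])
  refine ⟨_, hval ▸ isTJoin_map hP H.hom Subtype.val_injective, ?_⟩
  rintro _ ⟨p, -, rfl⟩ e he
  rw [Walk.edges_map, List.mem_map] at he
  obtain ⟨e, he, rfl⟩ := he
  induction e with
  | _ u v => exact p.2.2.adj_of_mem_edges he

theorem hasTJoin_symmDiff_of_subgraph (hP : G.IsTJoin T P) (hP₀ : P₀ ⊆ P) {H : G.Subgraph}
    (hH : H.Connected) (hfin : (endpoints P₀).Finite) (hends : endpoints P₀ ⊆ H.verts)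
    (hX : X.Finite) (heven : Even X.ncard) (hXH : X ⊆ H.verts) (hTX : T ∩ X ⊆ endpoints P₀)
    (hedges : ∀ p ∈ P \ P₀, ∀ e ∈ p.2.2.edges, e ∉ H.edgeSet) : G.HasTJoin (symmDiff T X) := by
  have hrest : G.IsTJoin (T \ endpoints P₀) (P \ P₀) :=
    endpoints_diff_of_isTJoin hP hP₀ ▸ isTJoin_endpoints_of_subset hP sdiff_subset
  have hT₀ : endpoints P₀ ⊆ T := endpoints_eq_of_isTJoin hP ▸ endpoints_mono hP₀
  obtain ⟨Q, hQ, hQH⟩ := exists_isTJoin_edges_subset hH (hfin.symmDiff hX)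
    ((even_ncard_symmDiff hfin hX).2 (iff_of_true
      (even_ncard_of_isTJoin (isTJoin_endpoints_of_subset hP hP₀) hfin) heven))
    (symmDiff_subset_union.trans (union_subset hends hXH))
  have hdisj : Disjoint (T \ endpoints P₀) (symmDiff (endpoints P₀) X) := by
    rw [Set.disjoint_left]
    rintro t ⟨ht, ht₀⟩ (h | h)
    exacts [ht₀ h.1, ht₀ (hTX ⟨ht, h.1⟩)]
  have hunion : T \ endpoints P₀ ∪ symmDiff (endpoints P₀) X = symmDiff T X := by
    ext t
    have h₁ := @hT₀ t
    have h₂ := @hTX t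
    simp only [mem_union, mem_sdiff, mem_symmDiff, mem_inter_iff] at h₂ ⊢
    tauto
  exact ⟨_, hunion ▸ isTJoin_union hrest hQ hdisj
    fun p hp q hq e hep heq => hedges p hp e hep (hQH q hq e heq)⟩

theorem finite_edgeSet_of_finite_verts {K : G.Subgraph} (hK : K.verts.Finite) :
    K.edgeSet.Finite := by
  refine ((hK.prod hK).image fun p => s(p.1, p.2)).subset fun e he => ?_
  induction e with
  | _ u v => exact ⟨(u, v), ⟨K.edge_vert he, K.edge_vert he.symm⟩, rfl⟩

theorem exists_connected_subgraph_verts_finite (hG : G.Connected) (hX : X.Finite) :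
    ∃ K : G.Subgraph, K.Connected ∧ K.verts.Finite ∧ X ⊆ K.verts := by
  classical
  obtain ⟨r⟩ := hG.nonempty
  obtain ⟨S, hS, hconn⟩ :=
    extend_finset_to_connected hG.preconnected (Finset.insert_nonempty r hX.toFinset)
  refine ⟨(⊤ : G.Subgraph).induce S, connected_induce_iff.1 hconn, S.finite_toSet, fun x hx => ?_⟩
  exact hS (Finset.mem_insert_of_mem (hX.mem_toFinset.2 hx))

theorem exists_connected_subgraph_toSubgraph_le {K : G.Subgraph} (hK : K.Connected)
    (hfin : P.Finite) (hmeet : ∀ p ∈ P, ∃ v ∈ p.2.2.support, v ∈ K.verts) :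
    ∃ H : G.Subgraph, H.Connected ∧ K ≤ H ∧ (∀ p ∈ P, p.2.2.toSubgraph ≤ H) ∧
      ∀ e ∈ H.edgeSet, e ∈ K.edgeSet ∨ ∃ p ∈ P, e ∈ p.2.2.edges := by
  induction P, hfin using Set.Finite.induction_on with
  | empty => exact ⟨K, hK, le_rfl, by simp, fun e he => .inl he⟩
  | @insert p Q _ _ ih =>
    obtain ⟨H, hH, hKH, hQH, hedges⟩ := ih fun q hq => hmeet q (.inr hq)
    obtain ⟨v, hvp, hvK⟩ := hmeet p (.inl rfl)
    have hv : v ∈ (H ⊓ p.2.2.toSubgraph).verts :=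
      ⟨hKH.1 hvK, p.2.2.mem_verts_toSubgraph.2 hvp⟩
    refine ⟨H ⊔ p.2.2.toSubgraph, Subgraph.connected_sup hH.preconnected
      p.2.2.toSubgraph_connected.preconnected ⟨v, hv⟩, hKH.trans le_sup_left, ?_, fun e he => ?_⟩
    · rintro q (rfl | hq)
      exacts [le_sup_right, (hQH q hq).trans le_sup_left]
    · rw [Subgraph.edgeSet_sup] at he
      obtain he | he := he
      · exact (hedges e he).imp_right fun ⟨q, hq, heq⟩ => ⟨q, .inr hq, heq⟩
      · exact .inr ⟨p, .inl rfl, p.2.2.mem_edges_toSubgraph.1 he⟩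

theorem hasTJoin_symmDiff (hG : G.Connected) (hT : G.HasTJoin T) (hX : X.Finite)
    (heven : Even X.ncard) : G.HasTJoin (symmDiff T X) := by
  obtain ⟨P, hP⟩ := hT
  obtain ⟨K, hK, hKfin, hXK⟩ := exists_connected_subgraph_verts_finite hG hX
  let P₀ := {p ∈ P | (p.1 ∈ K.verts ∨ p.2.1 ∈ K.verts) ∨ ∃ e ∈ p.2.2.edges, e ∈ K.edgeSet}
  have hP₀fin : P₀.Finite :=
    finite_setOf_end_mem_or_edge_mem hP hKfin (finite_edgeSet_of_finite_verts hKfin)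
  have hmeet : ∀ p ∈ P₀, ∃ v ∈ p.2.2.support, v ∈ K.verts := by
    rintro p ⟨-, (h | h) | ⟨e, he, heK⟩⟩
    · exact ⟨_, p.2.2.start_mem_support, h⟩
    · exact ⟨_, p.2.2.end_mem_support, h⟩
    · induction e with
      | _ u v => exact ⟨u, p.2.2.fst_mem_support_of_mem_edges he, K.edge_vert heK⟩
  obtain ⟨H, hH, hKH, hP₀H, hHedges⟩ := exists_connected_subgraph_toSubgraph_le hK hP₀fin hmeet
  refine hasTJoin_symmDiff_of_subgraph hP (P₀ := P₀) (fun p hp => hp.1) hH ?_ ?_ hX heven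
    (hXK.trans hKH.1) ?_ ?_
  · rw [endpoints_eq_union]
    exact (hP₀fin.image _).union (hP₀fin.image _)
  · rintro t ⟨p, hp, rfl | rfl⟩
    · exact (hP₀H p hp).1 (p.2.2.mem_verts_toSubgraph.2 p.2.2.start_mem_support)
    · exact (hP₀H p hp).1 (p.2.2.mem_verts_toSubgraph.2 p.2.2.end_mem_support)
  · rintro t ⟨ht, htX⟩
    obtain ⟨p, hp, hpt⟩ := (hP.2.2 t ht).exists
    refine ⟨p, ⟨hp, .inl ?_⟩, hpt⟩
    obtain rfl | rfl := hpt
    exacts [.inl (hXK htX), .inr (hXK htX)]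
  · rintro p ⟨hp, hp₀⟩ e he heH
    obtain h | ⟨q, hq, heq⟩ := hHedges e heH
    · exact hp₀ ⟨hp, .inr ⟨e, he, h⟩⟩
    · exact hP.2.1 p hp q hq.1 (fun h => hp₀ (h ▸ hq)) e he heq

end LocalChange

end TJoin

/-- If `T △ T'` is finite of odd cardinality and the connected graph `G` has no `T`-join,
then `G` has a `T'`-join. -/
theorem hasTJoin_of_not_hasTJoin_odd_symmDiff {V : Type*} (G : SimpleGraph V)
    (hG : G.Connected) (T T' : Set V) (hfin : (symmDiff T T').Finite)
    (hodd : Odd (symmDiff T T').ncard) (hT : ¬ G.HasTJoin T) :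
    G.HasTJoin T' := by
  obtain ⟨v, hv⟩ := (TJoin.hasTJoin_or_exists_hasTJoin_symmDiff_singleton hG T).resolve_left hT
  have hX : symmDiff (symmDiff T {v}) T' = symmDiff (symmDiff T T') {v} :=
    symmDiff_right_comm T {v} T'
  have hXfin : (symmDiff (symmDiff T T') {v}).Finite := hfin.symmDiff (Set.finite_singleton v)
  have hXeven : Even (symmDiff (symmDiff T T') {v}).ncard := by
    rw [TJoin.even_ncard_symmDiff hfin (Set.finite_singleton v), Set.ncard_singleton]
    exact iff_of_false (Nat.not_even_iff_odd.2 hodd) Nat.not_even_one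
  have hjoin := TJoin.hasTJoin_symmDiff hG hv hXfin hXeven
  rwa [← hX, symmDiff_symmDiff_cancel_left] at hjoin
end

section
/- Let G be a connected graph and T, T' ⊆ V(G) with T △ T' finite of even cardinality. If G contains a T-join, then G contains a T'-join. -/
/-!
Toggling the membership of `u` and `v` in `T` preserves the existence of a `T`-join whenever `u` and
`v` lie in the same component of `G`. A finite set meeting every component in an even number of
vertices splits into such pairs, so toggling them one by one leads from `T` to `T'`.

To toggle the ends of a walk that shares no edge with the join, use it to reroute the at most two
paths of the join ending in `u` or `v`. An arbitrary walk is followed edge by edge, so it remains to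
toggle the ends of an edge `xy` on some path `a … x y … b` of the join: remove this path, and toggle
`a`, `x` along its initial segment and `y`, `b` along its final segment.
-/

open scoped symmDiff
open SimpleGraph

section

variable {V : Type*} {G : SimpleGraph V} {T S : Set V} {E E' : Set (Sym2 V)} {u v x y : V}

section IsTJoin

variable {P : Set (Σ u : V, Σ v : V, G.Walk u v)}

theorem isTJoin_sdiff_singleton (hP : G.IsTJoin T P) {p : Σ u : V, Σ v : V, G.Walk u v}
    (hp : p ∈ P) : G.IsTJoin (T \ {p.1, p.2.1}) (P \ {p}) := by
  obtain ⟨hpath, hdisj, hunique⟩ := hP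
  obtain ⟨-, -, hstart, hend⟩ := hpath p hp
  have eq_of_start {q} (hq : q ∈ P) (h : q.1 = p.1 ∨ q.2.1 = p.1) : q = p :=
    (hunique _ hstart).unique ⟨hq, h⟩ ⟨hp, .inl rfl⟩
  have eq_of_end {q} (hq : q ∈ P) (h : q.1 = p.2.1 ∨ q.2.1 = p.2.1) : q = p :=
    (hunique _ hend).unique ⟨hq, h⟩ ⟨hp, .inr rfl⟩
  refine ⟨fun q ⟨hq, hqp⟩ ↦ ?_, fun q hq r hr ↦ hdisj q hq.1 r hr.1, fun t ⟨ht, htp⟩ ↦ ?_⟩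
  · obtain ⟨hqpath, hne, hqstart, hqend⟩ := hpath q hq
    refine ⟨hqpath, hne, ⟨hqstart, ?_⟩, hqend, ?_⟩
    · rintro (h | h)
      exacts [hqp (eq_of_start hq (.inl h)), hqp (eq_of_end hq (.inl h))]
    · rintro (h | h)
      exacts [hqp (eq_of_start hq (.inr h)), hqp (eq_of_end hq (.inr h))]
  · obtain ⟨q, ⟨hq, hqt⟩, huniq⟩ := hunique t ht
    refine ⟨q, ⟨⟨hq, ?_⟩, hqt⟩, fun r hr ↦ huniq r ⟨hr.1.1, hr.2⟩⟩
    rintro rfl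
    exact htp (hqt.imp Eq.symm Eq.symm)

theorem isTJoin_insert (hP : G.IsTJoin T P) (huv : u ≠ v) (hu : u ∉ T) (hv : v ∉ T)
    {p : G.Walk u v} (hp : p.IsPath) (hdisj : ∀ q ∈ P, Disjoint q.2.2.edgeSet p.edgeSet) :
    G.IsTJoin (insert u (insert v T)) (insert ⟨u, v, p⟩ P) := by
  obtain ⟨hpath, hPdisj, hunique⟩ := hP
  have endpoint_mem {q t} (hq : q ∈ P) (h : q.1 = t ∨ q.2.1 = t) : t ∈ T := by
    obtain rfl | rfl := h
    exacts [(hpath q hq).2.2.1, (hpath q hq).2.2.2]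
  have unique_new {t} (ht : u = t ∨ v = t) (htT : t ∉ T) :
      ∃! q, q ∈ insert ⟨u, v, p⟩ P ∧ (q.1 = t ∨ q.2.1 = t) := by
    refine ⟨⟨u, v, p⟩, ⟨.inl rfl, ht⟩, ?_⟩
    rintro q ⟨rfl | hq, hqt⟩
    exacts [rfl, (htT (endpoint_mem hq hqt)).elim]
  refine ⟨?_, ?_, ?_⟩
  · rintro q (rfl | hq)
    · exact ⟨hp, huv, by simp, by simp⟩
    · obtain ⟨hqpath, hne, hqstart, hqend⟩ := hpath q hq
      exact ⟨hqpath, hne, .inr (.inr hqstart), .inr (.inr hqend)⟩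
  · rintro q (rfl | hq) r (rfl | hr) hqr e heq her
    · exact hqr rfl
    · exact (hdisj r hr).notMem_of_mem_left her heq
    · exact (hdisj q hq).notMem_of_mem_left heq her
    · exact hPdisj q hq r hr hqr e heq her
  · rintro t (rfl | rfl | ht)
    · exact unique_new (.inl rfl) hu
    · exact unique_new (.inr rfl) hv
    · obtain ⟨q, ⟨hq, hqt⟩, huniq⟩ := hunique t ht
      refine ⟨q, ⟨.inr hq, hqt⟩, ?_⟩
      rintro r ⟨rfl | hr, hrt⟩
      · obtain rfl | rfl := hrt
        exacts [(hu ht).elim, (hv ht).elim]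
      · exact huniq r ⟨hr, hrt⟩

end IsTJoin

/-- `G` contains a `T`-join all of whose edges lie in `E`. Keeping track of `E` is what allows
further walks, known to avoid `E`, to be merged into the join. -/
def HasTJoinIn (G : SimpleGraph V) (T : Set V) (E : Set (Sym2 V)) : Prop :=
  ∃ P, G.IsTJoin T P ∧ ∀ p ∈ P, p.2.2.edgeSet ⊆ E

namespace HasTJoinIn

theorem hasTJoin (h : HasTJoinIn G T E) : G.HasTJoin T :=
  h.imp fun _ ↦ And.left

theorem mono (h : HasTJoinIn G T E) (hE : E ⊆ E') : HasTJoinIn G T E' :=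
  h.imp fun _ hP ↦ ⟨hP.1, fun p hp ↦ (hP.2 p hp).trans hE⟩

theorem exists_walk_of_mem (h : HasTJoinIn G T E) (hu : u ∈ T) :
    ∃ v ∈ T, v ≠ u ∧ ∃ p : G.Walk u v, p.edgeSet ⊆ E ∧
      HasTJoinIn G (T \ {u, v}) (E \ p.edgeSet) := by
  obtain ⟨P, hP, hE⟩ := h
  obtain ⟨p, ⟨hp, hpu⟩, -⟩ := hP.2.2 u hu
  have hrest : HasTJoinIn G (T \ {p.1, p.2.1}) (E \ p.2.2.edgeSet) :=
    ⟨P \ {p}, isTJoin_sdiff_singleton hP hp,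
      fun q hq e he ↦ ⟨hE q hq.1 he, hP.2.1 q hq.1 p hp hq.2 e he⟩⟩
  obtain ⟨-, hne, hstart, hend⟩ := hP.1 p hp
  have hpE := hE p hp
  obtain ⟨a, b, p⟩ := p
  obtain rfl | rfl := hpu
  · exact ⟨b, hend, hne.symm, p, hpE, hrest⟩
  · exact ⟨a, hstart, hne, p.reverse, by simpa using hpE, by simpa [Set.pair_comm] using hrest⟩

theorem insert_insert (h : HasTJoinIn G T E) (huv : u ≠ v) (hu : u ∉ T) (hv : v ∉ T)
    (w : G.Walk u v) (hw : Disjoint w.edgeSet E) :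
    HasTJoinIn G (insert u (insert v T)) (E ∪ w.edgeSet) := by
  classical
  obtain ⟨P, hP, hE⟩ := h
  have hsub : w.bypass.edgeSet ⊆ w.edgeSet := fun _ he ↦ w.edges_bypass_subset_edges he
  refine ⟨insert ⟨u, v, w.bypass⟩ P, isTJoin_insert hP huv hu hv w.bypass_isPath
    fun q hq ↦ hw.symm.mono (hE q hq) hsub, ?_⟩
  rintro q (rfl | hq)
  exacts [hsub.trans Set.subset_union_right, (hE q hq).trans Set.subset_union_left]

theorem exists_reroute (h : HasTJoinIn G T E) (hu : u ∈ T) (w : G.Walk u v)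
    (hw : Disjoint w.edgeSet E) :
    ∃ a ∈ T, a ≠ u ∧ ∃ (q : G.Walk v a) (E' : Set (Sym2 V)), Disjoint q.edgeSet E' ∧
      E' ∪ q.edgeSet ⊆ E ∪ w.edgeSet ∧ HasTJoinIn G (T \ {u, a}) E' := by
  obtain ⟨a, ha, hau, p, hpE, hrest⟩ := h.exists_walk_of_mem hu
  refine ⟨a, ha, hau, w.reverse.append p, E \ p.edgeSet, ?_, ?_, hrest⟩ <;>
    rw [Walk.edgeSet_append, Walk.edgeSet_reverse]
  · rw [Set.disjoint_union_left]
    exact ⟨hw.mono_right Set.sdiff_subset, Set.disjoint_sdiff_right⟩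
  · grind

theorem symmDiff_of_mem_of_notMem (h : HasTJoinIn G T E) (hu : u ∈ T) (hv : v ∉ T)
    (w : G.Walk u v) (hw : Disjoint w.edgeSet E) :
    HasTJoinIn G (T ∆ {u} ∆ {v}) (E ∪ w.edgeSet) := by
  obtain ⟨a, ha, hau, q, E', hq, hE', hrest⟩ := h.exists_reroute hu w hw
  have hT : insert v (insert a (T \ {u, a})) = T ∆ {u} ∆ {v} := by ext; grind
  rw [← hT]
  exact (hrest.insert_insert (by grind) (by grind) (by simp) q hq).mono hE'

theorem symmDiff_of_mem_of_mem (h : HasTJoinIn G T E) (huv : u ≠ v) (hu : u ∈ T) (hv : v ∈ T)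
    (w : G.Walk u v) (hw : Disjoint w.edgeSet E) :
    HasTJoinIn G (T ∆ {u} ∆ {v}) (E ∪ w.edgeSet) := by
  obtain ⟨a, ha, hau, q, E', hq, hE', hrest⟩ := h.exists_reroute hu w hw
  obtain rfl | hav := eq_or_ne a v
  · have hT : T \ {u, a} = T ∆ {u} ∆ {a} := by ext; grind
    exact hT ▸ hrest.mono (Set.subset_union_left.trans hE')
  · have hT : (T \ {u, a}) ∆ {v} ∆ {a} = T ∆ {u} ∆ {v} := by ext; grind
    exact hT ▸ (hrest.symmDiff_of_mem_of_notMem (by grind) (by simp) q hq).mono hE'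

theorem symmDiff_of_disjoint (h : HasTJoinIn G T E) (w : G.Walk u v) (hw : Disjoint w.edgeSet E) :
    HasTJoinIn G (T ∆ {u} ∆ {v}) (E ∪ w.edgeSet) := by
  obtain rfl | huv := eq_or_ne u v
  · simpa using h.mono Set.subset_union_left
  by_cases hu : u ∈ T <;> by_cases hv : v ∈ T
  · exact h.symmDiff_of_mem_of_mem huv hu hv w hw
  · exact h.symmDiff_of_mem_of_notMem hu hv w hw
  · rw [symmDiff_right_comm, ← w.edgeSet_reverse]
    exact h.symmDiff_of_mem_of_notMem hv hu w.reverse (by rwa [w.edgeSet_reverse])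
  · have hT : insert u (insert v T) = T ∆ {u} ∆ {v} := by ext; grind
    exact hT ▸ h.insert_insert huv hu hv w hw

end HasTJoinIn

theorem hasTJoin_symmDiff_of_isSubwalk {P : Set (Σ u : V, Σ v : V, G.Walk u v)}
    (hP : G.IsTJoin T P) {a b : V} {p : G.Walk a b} (hp : ⟨a, b, p⟩ ∈ P) (hxy : G.Adj x y)
    (hsub : hxy.toWalk.IsSubwalk p) : G.HasTJoin (T ∆ {x} ∆ {y}) := by
  have hrest : HasTJoinIn G (T \ {a, b}) p.edgeSetᶜ :=
    ⟨P \ {⟨a, b, p⟩}, isTJoin_sdiff_singleton hP hp, fun q hq ↦ hP.2.1 q hq.1 _ hp hq.2⟩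
  obtain ⟨hpath, hne, ha, hb⟩ := hP.1 _ hp
  obtain ⟨r, s, hrs⟩ := hsub
  have hedges : p.edgeSet = r.edgeSet ∪ {s(x, y)} ∪ s.edgeSet := by
    simp [hrs, Walk.edgeSet_append]
  have hr : Disjoint r.edgeSet p.edgeSetᶜ := Set.disjoint_compl_right_iff_subset.mpr (by grind)
  have hs : Disjoint s.edgeSet p.edgeSetᶜ := Set.disjoint_compl_right_iff_subset.mpr (by grind)
  have hsr : Disjoint s.edgeSet r.edgeSet := by
    have htrail := hpath.isTrail
    rw [hrs, Walk.isTrail_append, Walk.edges_append] at htrail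
    exact Set.disjoint_left.mpr fun e hes her ↦ htrail.2.2 (List.mem_append_left _ her) hes
  have hT : (T \ {a, b}) ∆ {a} ∆ {x} ∆ {y} ∆ {b} = T ∆ {x} ∆ {y} := by ext; grind
  rw [← hT]
  exact ((hrest.symmDiff_of_disjoint r hr).symmDiff_of_disjoint s (hs.union_right hsr)).hasTJoin

theorem hasTJoin_symmDiff_of_adj (hT : G.HasTJoin T) (hxy : G.Adj x y) :
    G.HasTJoin (T ∆ {x} ∆ {y}) := by
  obtain ⟨P, hP⟩ := hT
  by_cases hused : ∃ p ∈ P, s(x, y) ∈ p.2.2.edges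
  · obtain ⟨p, hp, hmem⟩ := hused
    obtain hsub | hsub := (Walk.isSubwalk_toWalk_iff_mem_edges hxy).mpr hmem
    · exact hasTJoin_symmDiff_of_isSubwalk hP hp hxy hsub
    · rw [symmDiff_right_comm]
      exact hasTJoin_symmDiff_of_isSubwalk hP hp hxy.symm hsub
  · have hjoin : HasTJoinIn G T {s(x, y)}ᶜ :=
      ⟨P, hP, fun p hp ↦ Set.subset_compl_singleton_iff.mpr fun hmem ↦ hused ⟨p, hp, hmem⟩⟩
    exact (hjoin.symmDiff_of_disjoint hxy.toWalk (by simp)).hasTJoin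

theorem hasTJoin_symmDiff_of_reachable (hT : G.HasTJoin T) (huv : G.Reachable u v) :
    G.HasTJoin (T ∆ {u} ∆ {v}) := by
  obtain ⟨w⟩ := huv
  induction w generalizing T with
  | nil => simpa using hT
  | cons hadj _ ih => simpa using ih (hasTJoin_symmDiff_of_adj hT hadj)

theorem even_ncard_sdiff_pair_inter_supp {c : G.ConnectedComponent}
    (heven : Even (S ∩ c.supp).ncard) (hu : u ∈ S) (hv : v ∈ S) (hne : u ≠ v)
    (huv : G.Reachable u v) : Even ((S \ {u, v}) ∩ c.supp).ncard := by
  have hmem : u ∈ c.supp ↔ v ∈ c.supp := by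
    simp [ConnectedComponent.sound huv]
  rw [Set.sdiff_inter_right_comm]
  by_cases huc : u ∈ c.supp
  · have hsub : {u, v} ⊆ S ∩ c.supp := Set.pair_subset ⟨hu, huc⟩ ⟨hv, hmem.mp huc⟩
    rw [Set.ncard_sdiff hsub, Set.ncard_pair hne]
    exact heven.tsub even_two
  · have hdisj : Disjoint (S ∩ c.supp) {u, v} := by
      simp [huc, hmem.not.mp huc]
    rwa [hdisj.sdiff_eq_left]

theorem exists_ne_reachable_of_even_ncard_inter_supp (hS : S.Finite)
    (heven : Even (S ∩ (G.connectedComponentMk u).supp).ncard) (hu : u ∈ S) :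
    ∃ v ∈ S, u ≠ v ∧ G.Reachable u v := by
  have hfin : (S ∩ (G.connectedComponentMk u).supp).Finite := hS.inter_of_left _
  have hcard : 1 < (S ∩ (G.connectedComponentMk u).supp).ncard := by
    have hpos := (Set.ncard_pos hfin).mpr ⟨u, hu, rfl⟩
    grind
  obtain ⟨v, ⟨hv, hvc⟩, hne⟩ := Set.exists_ne_of_one_lt_ncard hcard u
  exact ⟨v, hv, hne.symm, (ConnectedComponent.exact hvc).symm⟩

theorem hasTJoin_symmDiff_of_even_ncard_inter_supp (hT : G.HasTJoin T) (hS : S.Finite)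
    (heven : ∀ c : G.ConnectedComponent, Even (S ∩ c.supp).ncard) : G.HasTJoin (T ∆ S) := by
  induction hn : S.ncard using Nat.strong_induction_on generalizing S T with
  | _ n ih =>
  obtain rfl | ⟨u, hu⟩ := S.eq_empty_or_nonempty
  · rwa [← Set.bot_eq_empty, symmDiff_bot]
  obtain ⟨v, hv, hne, huv⟩ := exists_ne_reachable_of_even_ncard_inter_supp hS (heven _) hu
  have hlt : (S \ {u, v}).ncard < S.ncard :=
    Set.ncard_lt_ncard ⟨Set.sdiff_subset, fun h ↦ (h hu).2 (.inl rfl)⟩ hS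
  have hTS : T ∆ {u} ∆ {v} ∆ (S \ {u, v}) = T ∆ S := by ext; grind
  rw [← hTS]
  exact ih _ (hn ▸ hlt) (hasTJoin_symmDiff_of_reachable hT huv) hS.sdiff
    (fun c ↦ even_ncard_sdiff_pair_inter_supp (heven c) hu hv hne huv) rfl

theorem hasTJoin_of_hasTJoin_even_symmDiff_general (G : SimpleGraph V) (T T' : Set V)
    (hfin : (T ∆ T').Finite) (heven : ∀ c : G.ConnectedComponent, Even (T ∆ T' ∩ c.supp).ncard)
    (hT : G.HasTJoin T) : G.HasTJoin T' := by
  simpa using hasTJoin_symmDiff_of_even_ncard_inter_supp hT hfin heven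

end

/-- If `T △ T'` is finite of even cardinality and the connected graph `G` has a `T`-join,
then `G` has a `T'`-join. -/
theorem hasTJoin_of_hasTJoin_even_symmDiff {V : Type*} (G : SimpleGraph V)
    (hG : G.Connected) (T T' : Set V) (hfin : (symmDiff T T').Finite)
    (heven : Even (symmDiff T T').ncard) (hT : G.HasTJoin T) :
    G.HasTJoin T' := by
  refine hasTJoin_of_hasTJoin_even_symmDiff_general G T T' hfin (fun c ↦ ?_) hT
  have hc : c.supp = Set.univ :=
    Set.eq_univ_of_forall fun _ ↦ hG.preconnected.subsingleton_connectedComponent.elim _ c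
  rwa [hc, Set.inter_univ]
end

section
/- Let G be a connected graph and T, T' ⊆ V(G) with T △ T' finite. If G contains neither a T-join nor a T'-join, then |T △ T'| is even. -/
/-!
Fix a vertex `r`. A connected graph always has a `T`-join or a `T ∆ {r}`-join. Moreover, a `T`-join
can be rerouted along a path from `a` to `b` into a `T ∆ {a} ∆ {b}`-join. So if there is no `T`-join
and `T ∆ T'` has an odd number of elements, then toggling the elements of `T ∆ T'` and then `r`
turns a `T ∆ {r}`-join into a `T'`-join.

For the first claim, take a spanning tree rooted at `r` and call a vertex `v` tame if the part of
`T` in the subtree above `v` can be joined up inside this subtree, possibly after toggling `v`.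
Suppose that `r` is not tame, call a vertex wild if none of its ancestors, itself included, is tame,
and gather each vertex into a block with its last wild ancestor. The block of `v` consists of `v`
and of the subtrees above its tame children, so that the star at `v` can be used to join up `T`
inside the block, possibly after toggling `v`. Let `Q` be the set of the wild vertices for which
this toggling is needed; it suffices to join up `Q` in the tree of the wild vertices. If no vertex
of `Q` were above some wild `v`, then `v` would be tame. Hence every `t ∈ Q` has a minimal element
`f t` of `Q` above it. The tree paths from `t` to `f t` are pairwise edge-disjoint, and `Q` is
partitioned by the pairs `t`, `f t` with `t` in a suitable `M ⊆ Q`.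
-/

namespace TJoin

open SimpleGraph Function Set

universe u

variable {V : Type u} {G G' : SimpleGraph V} {S T : Set V}

/-- A linkage of `T` in `G`: the vertices of `T` are the values of `a` and `b`, without repetition,
and `a i` is joined to `b i` inside its own subgraph `H i`, these subgraphs being pairwise
edge-disjoint. A linkage carries the same information as a `T`-join (`hasTJoin_iff`), but arbitrary
connecting subgraphs are easier to glue than paths. -/
structure IsLinkage {ι : Type*} (G : SimpleGraph V) (T : Set V) (a b : ι → V)
    (H : ι → SimpleGraph V) : Prop where
  injective : Injective (Sum.elim a b)
  range_eq : range (Sum.elim a b) = T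
  pairwise_disjoint : Pairwise (Disjoint on H)
  le (i : ι) : H i ≤ G
  reachable (i : ι) : (H i).Reachable (a i) (b i)

lemma isLinkage_of_isTJoin {P : Set (Σ u : V, Σ v : V, G.Walk u v)} (hP : G.IsTJoin T P) :
    IsLinkage G T (fun p : P => p.1.1) (fun p : P => p.1.2.1)
      (fun p : P => fromEdgeSet {e | e ∈ p.1.2.2.edges}) := by
  obtain ⟨hpath, hdisj, huniq⟩ := hP
  have eq_of_common {p q : P} {t : V} (ht : t ∈ T) (hp : p.1.1 = t ∨ p.1.2.1 = t)
      (hq : q.1.1 = t ∨ q.1.2.1 = t) : p = q :=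
    Subtype.ext ((huniq t ht).unique ⟨p.2, hp⟩ ⟨q.2, hq⟩)
  refine ⟨Injective.sumElim ?_ ?_ ?_, ?_, fun p q hpq => ?_, fun p => ?_, fun p => ?_⟩
  · exact fun p q hpq => eq_of_common (hpath p p.2).2.2.1 (.inl rfl) (.inl hpq.symm)
  · exact fun p q hpq => eq_of_common (hpath p p.2).2.2.2 (.inr rfl) (.inr hpq.symm)
  · intro p q hpq
    obtain rfl := eq_of_common (hpath p p.2).2.2.1 (.inl rfl) (.inr hpq.symm)
    exact (hpath p p.2).2.1 hpq
  · refine Subset.antisymm ?_ fun t ht => ?_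
    · rintro _ ⟨p | p, rfl⟩
      exacts [(hpath p p.2).2.2.1, (hpath p p.2).2.2.2]
    · obtain ⟨p, ⟨hp, hpt | hpt⟩, -⟩ := huniq t ht
      exacts [⟨.inl ⟨p, hp⟩, hpt⟩, ⟨.inr ⟨p, hp⟩, hpt⟩]
  · rw [Function.onFun, fromEdgeSet_disjoint, edgeSet_fromEdgeSet, Set.disjoint_left]
    exact fun e hep heq => hdisj p p.2 q q.2 (fun h => hpq (Subtype.ext h)) e hep heq.1
  · exact (fromEdgeSet_mono fun e he => p.1.2.2.edges_subset_edgeSet he).trans_eq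
      (fromEdgeSet_edgeSet G)
  · refine ⟨p.1.2.2.transfer _ fun e he => ?_⟩
    rw [edgeSet_fromEdgeSet]
    exact ⟨he, G.not_isDiag_of_mem_edgeSet (p.1.2.2.edges_subset_edgeSet he)⟩

lemma IsLinkage.hasTJoin {ι : Type*} {a b : ι → V} {H : ι → SimpleGraph V}
    (h : IsLinkage G T a b H) : G.HasTJoin T := by
  obtain ⟨ha, hb, hab⟩ := Sum.elim_injective.1 h.injective
  choose w hw using fun i => (h.reachable i).exists_isPath
  let path (i : ι) : Σ u : V, Σ v : V, G.Walk u v := ⟨a i, b i, (w i).mapLe (h.le i)⟩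
  have mem (x : ι ⊕ ι) : Sum.elim a b x ∈ T := h.range_eq ▸ mem_range_self x
  refine ⟨range path, ?_, ?_, fun t ht => ?_⟩
  · rintro _ ⟨i, rfl⟩
    exact ⟨(Walk.isPath_mapLe (h.le i)).2 (hw i), hab i i, mem (.inl i), mem (.inr i)⟩
  · rintro _ ⟨i, rfl⟩ _ ⟨j, rfl⟩ hij e hei hej
    have hdisj := disjoint_edgeSet.2 (h.pairwise_disjoint (fun h => hij (congrArg path h)))
    rw [Walk.edges_mapLe_eq_edges] at hei hej
    exact Set.disjoint_left.1 hdisj ((w i).edges_subset_edgeSet hei)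
      ((w j).edges_subset_edgeSet hej)
  · obtain ⟨x, rfl⟩ := h.range_eq ▸ ht
    refine ⟨path (Sum.elim id id x), ⟨mem_range_self _, ?_⟩, ?_⟩
    · rcases x with i | i <;> simp [path]
    · rintro _ ⟨⟨j, rfl⟩, hj⟩
      rcases x with i | i <;> rcases hj with hj | hj
      · exact congrArg path (ha hj)
      · exact absurd hj.symm (hab i j)
      · exact absurd hj (hab j i)
      · exact congrArg path (hb hj)

lemma hasTJoin_iff : G.HasTJoin T ↔ ∃ (ι : Type u) (a b : ι → V) (H : ι → SimpleGraph V),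
    IsLinkage G T a b H :=
  ⟨fun ⟨_, hP⟩ => ⟨_, _, _, _, isLinkage_of_isTJoin hP⟩, fun ⟨_, _, _, _, h⟩ => h.hasTJoin⟩

lemma hasTJoin_mono (hT : G.HasTJoin T) (hG : G ≤ G') : G'.HasTJoin T := by
  obtain ⟨ι, a, b, H, h⟩ := hasTJoin_iff.1 hT
  exact IsLinkage.hasTJoin ⟨h.injective, h.range_eq, h.pairwise_disjoint,
    fun i => (h.le i).trans hG, h.reachable⟩

lemma hasTJoin_empty : G.HasTJoin ∅ :=
  IsLinkage.hasTJoin (ι := Empty) (a := Empty.elim) (b := Empty.elim) (H := Empty.elim)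
    ⟨by rintro (⟨⟨⟩⟩ | ⟨⟨⟩⟩), range_eq_empty _, by rintro ⟨⟩, by rintro ⟨⟩, by rintro ⟨⟩⟩

lemma hasTJoin_pair {a b : V} (hab : G.Reachable a b) (hne : a ≠ b) : G.HasTJoin {a, b} :=
  IsLinkage.hasTJoin (ι := Unit) (a := fun _ => a) (b := fun _ => b) (H := fun _ => G)
    ⟨Injective.sumElim (injective_of_subsingleton _) (injective_of_subsingleton _) fun _ _ => hne,
      by rw [Sum.elim_range, range_const, range_const, singleton_union],
      Subsingleton.pairwise, fun _ => le_rfl, fun _ => hab⟩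

lemma hasTJoin_iUnion {ι : Type*} {S : ι → Set V} {H : ι → SimpleGraph V}
    (hS : Pairwise (Disjoint on S)) (hH : Pairwise (Disjoint on H)) (hle : ∀ i, H i ≤ G)
    (h : ∀ i, (H i).HasTJoin (S i)) : G.HasTJoin (⋃ i, S i) := by
  choose κ a b K hK using fun i => hasTJoin_iff.1 (h i)
  have eq_of_common {i j : ι} {x : κ i ⊕ κ i} {y : κ j ⊕ κ j}
      (hxy : Sum.elim (a i) (b i) x = Sum.elim (a j) (b j) y) : i = j := by
    by_contra hij
    refine Set.disjoint_left.1 (hS hij) ((hK i).range_eq ▸ mem_range_self x) ?_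
    exact hxy ▸ (hK j).range_eq ▸ mem_range_self y
  refine IsLinkage.hasTJoin (ι := Σ i, κ i) (a := fun p => a p.1 p.2) (b := fun p => b p.1 p.2)
    (H := fun p => K p.1 p.2) ⟨Injective.sumElim ?_ ?_ ?_, ?_, ?_, ?_, ?_⟩
  · rintro ⟨i, k⟩ ⟨j, l⟩ hkl
    obtain rfl := eq_of_common (x := .inl k) (y := .inl l) hkl
    rw [Sum.inl_injective ((hK i).injective (a₁ := .inl k) (a₂ := .inl l) hkl)]
  · rintro ⟨i, k⟩ ⟨j, l⟩ hkl
    obtain rfl := eq_of_common (x := .inr k) (y := .inr l) hkl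
    rw [Sum.inr_injective ((hK i).injective (a₁ := .inr k) (a₂ := .inr l) hkl)]
  · rintro ⟨i, k⟩ ⟨j, l⟩ hkl
    obtain rfl := eq_of_common (x := .inl k) (y := .inr l) hkl
    exact Sum.inl_ne_inr ((hK i).injective (a₁ := .inl k) (a₂ := .inr l) hkl)
  · simp only [← fun i => (hK i).range_eq, Sum.elim_range, range_sigma_eq_iUnion_range,
      iUnion_union_distrib]
  · rintro ⟨i, k⟩ ⟨j, l⟩ hne
    by_cases hij : i = j
    · subst hij
      exact (hK i).pairwise_disjoint fun h => hne (congrArg (Sigma.mk i) h)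
    · exact (hH hij).mono ((hK i).le k) ((hK j).le l)
  · exact fun p => ((hK p.1).le p.2).trans (hle p.1)
  · exact fun p => (hK p.1).reachable p.2

lemma hasTJoin_union (hS : G.HasTJoin S) (hT : G'.HasTJoin T) (hST : Disjoint S T)
    (hG : Disjoint G G') : (G ⊔ G').HasTJoin (S ∪ T) := by
  rw [union_eq_iUnion]
  refine hasTJoin_iUnion (H := fun c => cond c G G') ?_ ?_ ?_ ?_
  · rintro (_ | _) (_ | _) h <;> first | exact absurd rfl h | exact hST | exact hST.symm
  · rintro (_ | _) (_ | _) h <;> first | exact absurd rfl h | exact hG | exact hG.symm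
  · rintro (_ | _)
    exacts [le_sup_right, le_sup_left]
  · rintro (_ | _)
    exacts [hT, hS]

section Exchange

open scoped symmDiff

variable {K : SimpleGraph V} {a b t x y : V}

/-- The spanning subgraph of `G` formed by the edges with both ends in `X`. -/
def within (G : SimpleGraph V) (X : Set V) : SimpleGraph V := (G.induce X).spanningCoe

lemma within_adj {X : Set V} : (within G X).Adj x y ↔ G.Adj x y ∧ x ∈ X ∧ y ∈ X := by
  simp [within]

lemma within_le (G : SimpleGraph V) (X : Set V) : within G X ≤ G := spanningCoe_induce_le G X

lemma within_mono {X Y : Set V} (h : X ⊆ Y) : within G X ≤ within G Y :=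
  fun _ _ hxy => within_adj.2 ((within_adj.1 hxy).imp_right (And.imp (@h _) (@h _)))

lemma disjoint_within {X Y : Set V} (h : Disjoint X Y) : Disjoint (within G X) (within G Y) := by
  refine SimpleGraph.disjoint_left.2 fun x y hX hY => ?_
  exact Set.disjoint_left.1 h (within_adj.1 hX).2.1 (within_adj.1 hY).2.1

lemma reachable_within (h : G.Reachable x y) : (within G {v | G.Reachable x v}).Reachable x y := by
  obtain ⟨p⟩ := h
  refine ⟨p.transfer _ (Sym2.ind fun u v huv => ?_)⟩
  have hu := p.fst_mem_support_of_mem_edges huv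
  have hv := p.snd_mem_support_of_mem_edges huv
  classical
  exact within_adj.2 ⟨p.adj_of_mem_edges huv, ⟨p.takeUntil u hu⟩, ⟨p.takeUntil v hv⟩⟩

lemma disjoint_within_reachable (h : ¬ G.Reachable x y) :
    Disjoint (within G {v | G.Reachable x v}) (within G {v | G.Reachable y v}) :=
  disjoint_within (Set.disjoint_left.2 fun _ hx hy => h (hx.trans hy.symm))

lemma IsLinkage.disjoint_iSup_ne {ι : Type*} {a b : ι → V} {H : ι → SimpleGraph V}
    (h : IsLinkage G T a b H) (i : ι) : Disjoint (⨆ j : {j // j ≠ i}, H j) (H i) :=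
  iSup_disjoint_iff.2 fun j => h.pairwise_disjoint j.2

lemma IsLinkage.hasTJoin_diff_pair {ι : Type*} {a b : ι → V} {H : ι → SimpleGraph V}
    (h : IsLinkage G T a b H) (i : ι) :
    (⨆ j : {j // j ≠ i}, H j).HasTJoin (T \ {a i, b i}) := by
  obtain ⟨ha, hb, hab⟩ := Sum.elim_injective.1 h.injective
  refine IsLinkage.hasTJoin (a := fun j : {j // j ≠ i} => a j) (b := fun j => b j)
    (H := fun j => H j) ⟨?_, ?_, ?_, fun j => le_iSup (fun j : {j // j ≠ i} => H j) j,
      fun j => h.reachable j⟩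
  · exact (ha.comp Subtype.val_injective).sumElim (hb.comp Subtype.val_injective)
      fun _ _ => hab _ _
  · rw [← h.range_eq]
    refine Subset.antisymm ?_ ?_
    · rintro _ ⟨⟨j, hj⟩ | ⟨j, hj⟩, rfl⟩
      · exact ⟨⟨.inl j, rfl⟩, by simp [ha.eq_iff, hj, hab]⟩
      · exact ⟨⟨.inr j, rfl⟩, by simp [hb.eq_iff, hj, (hab _ _).symm]⟩
    · rintro _ ⟨⟨j | j, rfl⟩, hj⟩
      · exact ⟨.inl ⟨j, fun h => hj (by simp [h])⟩, rfl⟩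
      · exact ⟨.inr ⟨j, fun h => hj (by simp [h])⟩, rfl⟩
  · exact fun j k hjk => h.pairwise_disjoint (Subtype.coe_injective.ne hjk)

lemma exists_hasTJoin_diff_pair (hT : G.HasTJoin T) (ht : t ∈ T) :
    ∃ s ∈ T, s ≠ t ∧ ∃ H₁ H₂ : SimpleGraph V, Disjoint H₁ H₂ ∧ H₁ ≤ G ∧ H₂ ≤ G ∧
      H₁.HasTJoin (T \ {t, s}) ∧ H₂.Reachable t s := by
  obtain ⟨ι, a, b, H, h⟩ := hasTJoin_iff.1 hT
  have hab := (Sum.elim_injective.1 h.injective).2.2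
  obtain ⟨i | i, rfl⟩ := h.range_eq ▸ ht
  · exact ⟨b i, h.range_eq ▸ ⟨.inr i, rfl⟩, (hab i i).symm, _, _, h.disjoint_iSup_ne i,
      iSup_le fun j => h.le j, h.le i, h.hasTJoin_diff_pair i, h.reachable i⟩
  · exact ⟨a i, h.range_eq ▸ ⟨.inl i, rfl⟩, hab i i, _, _, h.disjoint_iSup_ne i,
      iSup_le fun j => h.le j, h.le i, pair_comm (a i) (b i) ▸ h.hasTJoin_diff_pair i,
      (h.reachable i).symm⟩

lemma hasTJoin_insert_diff (hT : G.HasTJoin T) (hK : Disjoint G K) (hab : K.Reachable a b)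
    (ha : a ∈ T) (hb : b ∉ T) : (G ⊔ K).HasTJoin (insert b (T \ {a})) := by
  obtain ⟨s, hs, hsa, H₁, H₂, hdisj, hH₁, hH₂, hT', has⟩ := exists_hasTJoin_diff_pair hT ha
  have hsb : (H₂ ⊔ K).Reachable s b :=
    (has.symm.mono le_sup_left).trans (hab.mono le_sup_right)
  have hunion := hasTJoin_union hT' (hasTJoin_pair hsb (ne_of_mem_of_not_mem hs hb))
    (by grind) (disjoint_sup_right.2 ⟨hdisj, hK.mono_left hH₁⟩)
  have heq : insert b (T \ {a}) = T \ {a, s} ∪ {s, b} := by ext; grind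
  exact heq ▸ hasTJoin_mono hunion (by grind [sup_le_iff, le_sup_left, le_sup_right])

lemma hasTJoin_symmDiff_of_disjoint (hT : G.HasTJoin T) (hK : Disjoint G K)
    (hab : K.Reachable a b) : (G ⊔ K).HasTJoin (T ∆ {a} ∆ {b}) := by
  rcases eq_or_ne a b with rfl | hne
  · simpa using hasTJoin_mono hT le_sup_left
  by_cases ha : a ∈ T <;> by_cases hb : b ∈ T
  · obtain ⟨s, hs, hsa, H₁, H₂, hdisj, hH₁, hH₂, hT', has⟩ := exists_hasTJoin_diff_pair hT ha
    rcases eq_or_ne s b with rfl | hsb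
    · have heq : T ∆ {a} ∆ {s} = T \ {a, s} := by ext; grind
      exact heq ▸ hasTJoin_mono hT' (hH₁.trans le_sup_left)
    · have hbs : (H₂ ⊔ K).Reachable b s :=
        (hab.symm.mono le_sup_right).trans (has.mono le_sup_left)
      have heq : T ∆ {a} ∆ {b} = insert s ((T \ {a, s}) \ {b}) := by
        ext; grind
      exact heq ▸ hasTJoin_mono (hasTJoin_insert_diff hT'
        (disjoint_sup_right.2 ⟨hdisj, hK.mono_left hH₁⟩) hbs (by grind) (by grind))
        (sup_le (hH₁.trans le_sup_left) (sup_le_sup_right hH₂ K))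
  · have heq : T ∆ {a} ∆ {b} = insert b (T \ {a}) := by ext; grind
    exact heq ▸ hasTJoin_insert_diff hT hK hab ha hb
  · have heq : T ∆ {a} ∆ {b} = insert a (T \ {b}) := by ext; grind
    exact heq ▸ hasTJoin_insert_diff hT hK hab.symm hb ha
  · have heq : T ∆ {a} ∆ {b} = T ∪ {a, b} := by ext; grind
    exact heq ▸ hasTJoin_union hT (hasTJoin_pair hab hne) (by grind) hK

lemma reachable_sup_edge (h : (G ⊔ edge a b).Reachable x y) :
    G.Reachable x y ∨ G.Reachable x a ∧ G.Reachable b y ∨ G.Reachable x b ∧ G.Reachable a y := by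
  obtain ⟨p⟩ := h
  induction p with
  | nil => exact .inl .rfl
  | cons huv _ ih =>
    rcases (sup_adj ..).1 huv with huv | huv
    · have := huv.reachable
      grind [Reachable.trans]
    · obtain ⟨⟨rfl, rfl⟩ | ⟨rfl, rfl⟩, -⟩ := (edge_adj ..).1 huv <;>
        grind [Reachable.refl, Reachable.trans, Reachable.symm]

/-- The connections from `x` to `a` and from `y` to `b` are edge-disjoint, being taken in different
components of `K`. -/
lemma hasTJoin_symmDiff_of_not_reachable (hT : G.HasTJoin (T \ {x, y})) (hK : Disjoint G K)
    (hx : x ∈ T) (hy : y ∈ T) (hxa : K.Reachable x a) (hyb : K.Reachable y b)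
    (hxy : ¬ K.Reachable x y) : (G ⊔ K).HasTJoin (T ∆ {a} ∆ {b}) := by
  have hxa' := hasTJoin_symmDiff_of_disjoint hT (hK.mono_right (within_le _ _))
    (reachable_within hxa)
  have hyb' := hasTJoin_symmDiff_of_disjoint hxa' (disjoint_sup_left.2
    ⟨hK.mono_right (within_le _ _), disjoint_within_reachable hxy⟩) (reachable_within hyb)
  have heq : T ∆ {a} ∆ {b} = (T \ {x, y}) ∆ {x} ∆ {a} ∆ {y} ∆ {b} := by
    have hne : x ≠ y := fun h => hxy (h ▸ .rfl)
    ext; grind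
  exact heq ▸ hasTJoin_mono hyb' (sup_le (sup_le_sup_left (within_le _ _) _)
    ((within_le _ _).trans le_sup_right))

lemma hasTJoin_symmDiff_of_not_adj (hT : G.HasTJoin T) (hG : G ≤ G') (hab : G'.Adj a b)
    (hnab : ¬ G.Adj a b) : G'.HasTJoin (T ∆ {a} ∆ {b}) := by
  have hedge : (edge a b).Reachable a b := ((edge_adj ..).2 ⟨.inl ⟨rfl, rfl⟩, hab.ne⟩).reachable
  exact hasTJoin_mono (hasTJoin_symmDiff_of_disjoint hT ((disjoint_edge _).2 hnab) hedge)
    (sup_le hG ((edge_le_iff _).2 (.inr hab)))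

lemma hasTJoin_symmDiff_of_adj (hT : G.HasTJoin T) (hab : G.Adj a b) :
    G.HasTJoin (T ∆ {a} ∆ {b}) := by
  obtain ⟨ι, c, d, H, h⟩ := hasTJoin_iff.1 hT
  by_cases hi : ∃ i, (H i).Adj a b
  swap
  · exact hasTJoin_symmDiff_of_not_adj (G := ⨆ i, H i) (IsLinkage.hasTJoin ⟨h.injective,
      h.range_eq, h.pairwise_disjoint, le_iSup H, h.reachable⟩) (iSup_le h.le) hab
        (by rwa [iSup_adj])
  obtain ⟨i, hi⟩ := hi
  set R := ⨆ j : {j // j ≠ i}, H j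
  set K := H i \ edge a b
  have hR : R.HasTJoin (T \ {c i, d i}) := h.hasTJoin_diff_pair i
  have hRK : Disjoint R K := (h.disjoint_iSup_ne i).mono_right sdiff_le
  have hRK_le : R ⊔ K ≤ G := sup_le (iSup_le fun j => h.le j) (sdiff_le.trans (h.le i))
  have hc : c i ∈ T := h.range_eq ▸ ⟨.inl i, rfl⟩
  have hd : d i ∈ T := h.range_eq ▸ ⟨.inr i, rfl⟩
  by_cases hcd : K.Reachable (c i) (d i)
  · have hne : c i ≠ d i := (Sum.elim_injective.1 h.injective).2.2 i i
    have hjoin := hasTJoin_union hR (hasTJoin_pair hcd hne) disjoint_sdiff_left hRK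
    rw [sdiff_union_of_subset (insert_subset hc (singleton_subset_iff.2 hd))] at hjoin
    have hnadj : ¬ (R ⊔ K).Adj a b := (disjoint_edge _).1 <| disjoint_sup_left.2
      ⟨(h.disjoint_iSup_ne i).mono_right ((edge_le_iff _).2 (.inr hi)), disjoint_sdiff_self_left⟩
    exact hasTJoin_symmDiff_of_not_adj hjoin hRK_le hab hnadj
  · have hreach : (K ⊔ edge a b).Reachable (c i) (d i) := (h.reachable i).mono le_sdiff_sup
    rcases (reachable_sup_edge hreach).resolve_left hcd with ⟨hca, hbd⟩ | ⟨hcb, had⟩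
    · exact hasTJoin_mono
        (hasTJoin_symmDiff_of_not_reachable hR hRK hc hd hca hbd.symm hcd) hRK_le
    · rw [symmDiff_right_comm]
      exact hasTJoin_mono
        (hasTJoin_symmDiff_of_not_reachable hR hRK hc hd hcb had.symm hcd) hRK_le

lemma hasTJoin_symmDiff_of_reachable (hT : G.HasTJoin T) (hab : G.Reachable a b) :
    G.HasTJoin (T ∆ {a} ∆ {b}) := by
  obtain ⟨p⟩ := hab
  induction p generalizing T with
  | nil => simpa using hT
  | @cons u v w huv _ ih =>
    simpa [symmDiff_assoc] using ih (hasTJoin_symmDiff_of_adj hT huv)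

end Exchange

section Contraction

open scoped symmDiff

variable {K : SimpleGraph V} {C Q U X : Set V} {v : V}

/-- The part of `T` inside `X` can be joined up inside `X`. -/
def JoinableOn (G : SimpleGraph V) (T X : Set V) : Prop := (within G X).HasTJoin (T ∩ X)

/-- The part of `T` inside `X` can be joined up inside `X`, possibly after toggling whether `v`
belongs to `T`. It is meant for a `v ∈ X`, from which one path may then be sent out of `X`. -/
def TameAt (G : SimpleGraph V) (T X : Set V) (v : V) : Prop :=
  JoinableOn G T X ∨ JoinableOn G (T ∆ {v}) X

lemma joinableOn_congr (h : S ∩ X = T ∩ X) : JoinableOn G S X ↔ JoinableOn G T X := by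
  rw [JoinableOn, JoinableOn, h]

lemma joinableOn_of_inter_eq_empty (h : T ∩ X = ∅) : JoinableOn G T X := by
  rw [JoinableOn, h]
  exact hasTJoin_empty

lemma joinableOn_univ : JoinableOn G T univ ↔ G.HasTJoin T := by
  rw [JoinableOn, inter_univ, within, spanningCoe_induce_univ]

lemma hasTJoin_biUnion {X : V → Set V} (hX : U.PairwiseDisjoint X)
    (h : ∀ u ∈ U, JoinableOn G T (X u)) :
    (⨆ u ∈ U, within G (X u)).HasTJoin (T ∩ ⋃ u ∈ U, X u) := by
  have hdisj : Pairwise (Disjoint on fun u : U => X u) :=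
    fun u w huw => hX u.2 w.2 (Subtype.coe_injective.ne huw)
  rw [biUnion_eq_iUnion, inter_iUnion]
  exact hasTJoin_iUnion (fun u w huw => (hdisj huw).mono inter_subset_right inter_subset_right)
    (fun u w huw => disjoint_within (hdisj huw)) (fun u => le_biSup (fun u => within G (X u)) u.2)
    (fun u => h u u.2)

lemma iSup_within_le (X : V → Set V) :
    ⨆ u ∈ U, within G (X u) ≤ within G (⋃ u ∈ U, X u) :=
  iSup₂_le fun _ hu => within_mono (subset_biUnion_of_mem hu)

lemma joinableOn_biUnion {X : V → Set V} (hX : U.PairwiseDisjoint X)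
    (h : ∀ u ∈ U, JoinableOn G T (X u)) : JoinableOn G T (⋃ u ∈ U, X u) :=
  hasTJoin_mono (hasTJoin_biUnion hX h) (iSup_within_le X)

lemma hasTJoin_inter_union {Y : Set V} {a b : V} (hXY : Disjoint X Y) (ha : a ∈ X) (hb : b ∈ Y)
    (hX : JoinableOn G (T ∆ {a}) X) (hY : JoinableOn G (T ∆ {b}) Y) (hK : K.Reachable a b) :
    (within G X ⊔ within G Y ⊔ K).HasTJoin (T ∩ (X ∪ Y)) := by
  have hunion := hasTJoin_mono (hasTJoin_union hX hY
    (hXY.mono inter_subset_right inter_subset_right) (disjoint_within hXY))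
    (le_sup_left (b := K))
  have heq : T ∩ (X ∪ Y) = ((T ∆ {a}) ∩ X ∪ (T ∆ {b}) ∩ Y) ∆ {a} ∆ {b} := by
    have := Set.disjoint_left.1 hXY
    ext; grind
  exact heq ▸ hasTJoin_symmDiff_of_reachable hunion (hK.mono le_sup_right)

lemma hasTJoin_biUnion_of_hasTJoin {X : V → Set V} (hK : K.HasTJoin Q)
    (hX : Q.PairwiseDisjoint X) (hmem : ∀ q ∈ Q, q ∈ X q)
    (hdisj : ∀ q ∈ Q, Disjoint (within G (X q)) K)
    (h : ∀ q ∈ Q, JoinableOn G (T ∆ {q}) (X q)) :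
    (K ⊔ ⨆ q ∈ Q, within G (X q)).HasTJoin (T ∩ ⋃ q ∈ Q, X q) := by
  obtain ⟨ι, a, b, H, hH⟩ := hasTJoin_iff.1 hK
  have ha (i : ι) : a i ∈ Q := hH.range_eq ▸ ⟨.inl i, rfl⟩
  have hb (i : ι) : b i ∈ Q := hH.range_eq ▸ ⟨.inr i, rfl⟩
  obtain ⟨ha_inj, hb_inj, hab⟩ := Sum.elim_injective.1 hH.injective
  have haa {i j : ι} (hij : i ≠ j) := hX (ha i) (ha j) (ha_inj.ne hij)
  have hbb {i j : ι} (hij : i ≠ j) := hX (hb i) (hb j) (hb_inj.ne hij)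
  have hab (i j : ι) := hX (ha i) (hb j) (hab i j)
  have hWH {q : V} (hq : q ∈ Q) (i : ι) := (hdisj q hq).mono_right (hH.le i)
  have hcover : T ∩ ⋃ q ∈ Q, X q = ⋃ i, T ∩ (X (a i) ∪ X (b i)) := by
    rw [← inter_iUnion, ← hH.range_eq, biUnion_range, iUnion_sum, iUnion_union_distrib]
    rfl
  rw [hcover]
  refine hasTJoin_iUnion (H := fun i => within G (X (a i)) ⊔ within G (X (b i)) ⊔ H i)
    (fun i j hij => ?_) (fun i j hij => ?_) (fun i => ?_) (fun i => ?_)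
  · refine Disjoint.mono inter_subset_right inter_subset_right ?_
    simp only [disjoint_union_left, disjoint_union_right]
    exact ⟨⟨haa hij, (hab j i).symm⟩, hab i j, hbb hij⟩
  · simp only [Function.onFun, disjoint_sup_left, disjoint_sup_right]
    exact ⟨⟨⟨⟨disjoint_within (haa hij), disjoint_within (hab j i).symm⟩, (hWH (ha j) i).symm⟩,
      ⟨disjoint_within (hab i j), disjoint_within (hbb hij)⟩, (hWH (hb j) i).symm⟩,
      ⟨hWH (ha i) j, hWH (hb i) j⟩, hH.pairwise_disjoint hij⟩
  · have hle {q : V} (hq : q ∈ Q) := le_biSup (fun q => within G (X q)) hq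
    exact sup_le ((sup_le (hle (ha i)) (hle (hb i))).trans le_sup_right)
      ((hH.le i).trans le_sup_left)
  · exact hasTJoin_inter_union (hab i i) (hmem _ (ha i)) (hmem _ (hb i)) (h _ (ha i))
      (h _ (hb i)) (hH.reachable i)

/-- Contracting the parts `X u` leaves the problem of joining up `Q`, the set of parts which have to
send out a path. -/
lemma joinableOn_biUnion_of_hasTJoin {X : V → Set V} (hX : U.PairwiseDisjoint X)
    (hmem : ∀ u ∈ U, u ∈ X u) (hKG : K ≤ within G (⋃ u ∈ U, X u))
    (hdisj : ∀ u ∈ U, Disjoint (within G (X u)) K) (hQU : Q ⊆ U) (hK : K.HasTJoin Q)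
    (hQ : ∀ u ∈ Q, JoinableOn G (T ∆ {u}) (X u)) (hU : ∀ u ∈ U, u ∉ Q → JoinableOn G T (X u)) :
    JoinableOn G T (⋃ u ∈ U, X u) := by
  have hcover : T ∩ ⋃ u ∈ U, X u = (T ∩ ⋃ u ∈ Q, X u) ∪ (T ∩ ⋃ u ∈ U \ Q, X u) := by
    rw [← inter_union_distrib_left, ← biUnion_union, union_sdiff_cancel hQU]
  have hQ' := hasTJoin_biUnion_of_hasTJoin hK (hX.subset hQU) (fun q hq => hmem q (hQU hq))
    (fun q hq => hdisj q (hQU hq)) hQ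
  have hU' := hasTJoin_biUnion (hX.subset sdiff_subset) fun u hu => hU u hu.1 hu.2
  have hXdisj {q u : V} (hq : q ∈ Q) (hu : u ∈ U \ Q) : Disjoint (X q) (X u) :=
    hX (hQU hq) hu.1 (ne_of_mem_of_not_mem hq hu.2)
  rw [JoinableOn, hcover]
  refine hasTJoin_mono (hasTJoin_union hQ' hU' ?_ ?_) ?_
  · refine Disjoint.mono inter_subset_right inter_subset_right ?_
    simp only [disjoint_iUnion_left, disjoint_iUnion_right]
    exact fun u hu q hq => hXdisj hq hu
  · simp only [disjoint_sup_left, iSup_disjoint_iff, disjoint_iSup_iff]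
    exact fun u hu => ⟨(hdisj u hu.1).symm, fun q hq => disjoint_within (hXdisj hq hu)⟩
  · exact sup_le (sup_le hKG ((biSup_mono fun u hu => hQU hu).trans (iSup_within_le X)))
      ((biSup_mono fun u hu => hu.1).trans (iSup_within_le X))

lemma exists_equiv_sum_self_of_even_ncard (h : Even Q.ncard) :
    ∃ B : Type u, Nonempty (B ⊕ B ≃ Q) := by
  rcases Q.finite_or_infinite with hQ | hQ
  · obtain ⟨k, hk⟩ := h
    have := hQ.to_subtype
    exact ⟨ULift (Fin k), Finite.card_eq.1 (by simp [Nat.card_coe_set_eq, hk])⟩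
  · have := hQ.to_subtype
    exact ⟨Q, Cardinal.eq.1 (Cardinal.add_mk_eq_self (α := Q))⟩

/-- The star with centre `v` and set of leaves `Q \ {v}`. -/
def starOn (v : V) (Q : Set V) : SimpleGraph V := ⨆ q ∈ Q, edge v q

lemma hasTJoin_starOn (v : V) (hQ : Even Q.ncard) : (starOn v Q).HasTJoin Q := by
  obtain ⟨B, ⟨e⟩⟩ := exists_equiv_sum_self_of_even_ncard hQ
  have hreach (q : V) : (edge v q).Reachable v q := by
    rcases eq_or_ne v q with rfl | hne
    exacts [.rfl, ((edge_adj ..).2 ⟨.inl ⟨rfl, rfl⟩, hne⟩).reachable]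
  have hne {x y : B ⊕ B} (hxy : x ≠ y) : Disjoint (edge v (e x : V)) (edge v (e y)) := by
    have : (e x : V) ≠ e y := Subtype.coe_injective.ne (e.injective.ne hxy)
    rw [disjoint_edge, edge_adj]
    grind
  have helim : Sum.elim (fun i => (e (.inl i) : V)) (fun i => (e (.inr i) : V)) =
      Subtype.val ∘ e := Sum.elim_comp_inl_inr (Subtype.val ∘ e)
  refine IsLinkage.hasTJoin (a := fun i => e (.inl i)) (b := fun i => e (.inr i))
    (H := fun i => edge v (e (.inl i)) ⊔ edge v (e (.inr i)))
    ⟨?_, ?_, fun i j hij => ?_, fun i => ?_, fun i => ?_⟩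
  · rw [helim]
    exact Subtype.val_injective.comp e.injective
  · rw [helim, range_comp, e.range_eq_univ, image_univ, Subtype.range_coe]
  · simp only [Function.onFun, disjoint_sup_left, disjoint_sup_right]
    exact ⟨⟨hne (by simpa), hne (by simp)⟩, hne (by simp), hne (by simpa)⟩
  · exact sup_le (le_biSup (edge v) (e _).2) (le_biSup (edge v) (e _).2)
  · exact ((hreach _).symm.mono le_sup_left).trans ((hreach _).mono le_sup_right)

lemma disjoint_within_starOn (h : v ∈ X → X ⊆ {v}) : Disjoint (within G X) (starOn v Q) := by
  refine SimpleGraph.disjoint_left.2 fun x y hxy hstar => ?_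
  obtain ⟨-, hx, hy⟩ := within_adj.1 hxy
  simp only [starOn, iSup_adj, edge_adj] at hstar
  grind

lemma starOn_le_within (hvX : v ∈ X) (hQX : Q ⊆ X) (hadj : ∀ q ∈ Q, q ≠ v → G.Adj v q) :
    starOn v Q ≤ within G X := by
  refine iSup₂_le fun q hq => (edge_le_iff _).2 ?_
  rw [within_adj]
  grind

lemma exists_even_ncard_subset_insert (hv : v ∉ Q) :
    ∃ Q', Even Q'.ncard ∧ Q ⊆ Q' ∧ Q' ⊆ insert v Q := by
  by_cases hQ : Even Q.ncard
  · exact ⟨Q, hQ, Subset.rfl, subset_insert v Q⟩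
  · have hfin : Q.Finite := finite_of_ncard_ne_zero fun h => hQ (h ▸ Even.zero)
    refine ⟨insert v Q, ?_, subset_insert v Q, Subset.rfl⟩
    rw [ncard_insert_of_notMem hv hfin]
    exact Nat.even_add_one.2 hQ

lemma joinableOn_insert_biUnion {X : V → Set V} (hX : C.PairwiseDisjoint X)
    (hv : ∀ c ∈ C, v ∉ X c) (hmem : ∀ c ∈ C, c ∈ X c) (hadj : ∀ c ∈ C, G.Adj v c)
    (hQ : Even Q.ncard) (hQC : Q ⊆ insert v C) (hvQ : v ∈ T ↔ v ∈ Q)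
    (h : ∀ c ∈ C, c ∈ Q → JoinableOn G (T ∆ {c}) (X c))
    (h' : ∀ c ∈ C, c ∉ Q → JoinableOn G T (X c)) :
    JoinableOn G T (insert v (⋃ c ∈ C, X c)) := by
  classical
  set Y := update X v {v}
  have hYv : Y v = {v} := update_self v _ X
  have hYC {c : V} (hc : c ∈ C) : Y c = X c :=
    update_of_ne (by grind) _ X
  have hY : (insert v C).PairwiseDisjoint Y := by
    refine pairwiseDisjoint_insert.2 ⟨fun c hc d hd hcd => ?_, fun c hc _ => ?_⟩
    · simpa only [Function.onFun, hYC hc, hYC hd] using hX hc hd hcd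
    · simpa only [hYv, hYC hc, disjoint_singleton_left] using hv c hc
  have hmem' : ∀ u ∈ insert v C, u ∈ Y u :=
    forall_mem_insert.2 ⟨hYv ▸ rfl, fun c hc => (hYC hc).symm ▸ hmem c hc⟩
  have hsub := fun u (hu : u ∈ insert v C) => mem_biUnion hu (hmem' u hu)
  have hvY : ∀ u ∈ insert v C, v ∈ Y u → Y u ⊆ {v} := forall_mem_insert.2
    ⟨fun _ => hYv.subset, fun c hc hvc => absurd (hYC hc ▸ hvc) (hv c hc)⟩
  have hcover : insert v (⋃ c ∈ C, X c) = ⋃ u ∈ insert v C, Y u := by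
    rw [biUnion_insert, hYv, singleton_union, iUnion₂_congr fun c hc => (hYC hc).symm]
  rw [hcover]
  refine joinableOn_biUnion_of_hasTJoin hY hmem' ?_ (fun u hu => disjoint_within_starOn (hvY u hu))
    hQC (hasTJoin_starOn v hQ) (fun u hu => ?_) (fun u hu huQ => ?_)
  · exact starOn_le_within (hsub v (mem_insert v C)) (hQC.trans hsub)
      fun q hq hqv => hadj q ((hQC hq).resolve_left hqv)
  · rcases hQC hu with rfl | huC
    · exact joinableOn_of_inter_eq_empty (by ext; grind)
    · exact (hYC huC).symm ▸ h u huC hu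
  · rcases hu with rfl | huC
    · exact joinableOn_of_inter_eq_empty (by ext; grind)
    · exact (hYC huC).symm ▸ h' u huC huQ

/-- The parity of the number of paths through `v` is corrected by toggling whether `v` belongs to
`T`. -/
lemma tameAt_insert_biUnion {X : V → Set V} (hX : C.PairwiseDisjoint X)
    (hv : ∀ c ∈ C, v ∉ X c) (hmem : ∀ c ∈ C, c ∈ X c) (hadj : ∀ c ∈ C, G.Adj v c)
    (h : ∀ c ∈ C, TameAt G T (X c) c) : TameAt G T (insert v (⋃ c ∈ C, X c)) v := by
  have hvC : v ∉ C := fun hvC => hv v hvC (hmem v hvC)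
  obtain ⟨Q, hQ, hCQ, hQC⟩ := exists_even_ncard_subset_insert
    (Q := {c ∈ C | ¬ JoinableOn G T (X c)}) (fun hv => hvC hv.1)
  have hjoin {T' : Set V} (hT' : ∀ X, v ∉ X → T' ∩ X = T ∩ X) (hvQ : v ∈ T' ↔ v ∈ Q) :
      JoinableOn G T' (insert v (⋃ c ∈ C, X c)) := by
    refine joinableOn_insert_biUnion hX hv hmem hadj hQ
      (hQC.trans (insert_subset_insert (sep_subset C _))) hvQ (fun c hc hcQ => ?_)
      (fun c hc hcQ => (joinableOn_congr (hT' _ (hv c hc))).2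
        (not_not.1 fun hbad => hcQ (hCQ ⟨hc, hbad⟩)))
    have hbad : ¬ JoinableOn G T (X c) :=
      ((hQC hcQ).resolve_left (ne_of_mem_of_not_mem hc hvC)).2
    refine (joinableOn_congr (T := T ∆ {c}) ?_).2 ((h c hc).resolve_left hbad)
    rw [inter_symmDiff_distrib_right, inter_symmDiff_distrib_right, hT' _ (hv c hc)]
  by_cases hvQ : v ∈ T ↔ v ∈ Q
  · exact .inl (hjoin (fun _ _ => rfl) hvQ)
  · exact .inr (hjoin (fun X hX => by ext; grind) (by grind))

end Contraction

lemma exists_image_eq_compl {α : Type*} [Preorder α] [WellFoundedLT α] {f : α → α}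
    (hf : ∀ x, x < f x) : ∃ M : Set α, f '' M = Mᶜ := by
  let M : α → Prop := (wellFounded_lt (α := α)).fix fun x ih => ∀ y (h : y < x), f y = x → ¬ ih y h
  have hM (x : α) : M x ↔ ∀ y, y < x → f y = x → ¬ M y := by
    simp only [M]
    rw [WellFounded.fix_eq]
  refine ⟨{x | M x}, ext fun x => ?_⟩
  rw [mem_compl_iff, mem_ofPred_eq, hM]
  push Not
  exact ⟨fun ⟨y, hy, hyx⟩ => ⟨y, hyx ▸ hf y, hyx, hy⟩, fun ⟨y, _, hyx, hy⟩ => ⟨y, hy, hyx⟩⟩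

section Block

variable [PartialOrder V] {v : V}

/-- The vertices `x` whose last ancestor in `S` is `v`, in the rooted tree given by the order; the
ancestors of a vertex include the vertex itself. -/
def block (S : Set V) (v : V) : Set V := {x | IsGreatest (S ∩ Iic x) v}

lemma mem_block_self (hv : v ∈ S) : v ∈ block S v :=
  ⟨⟨hv, le_rfl⟩, fun _ hx => hx.2⟩

lemma pairwiseDisjoint_block (U : Set V) : U.PairwiseDisjoint (block S) :=
  fun _ _ _ _ huv => Set.disjoint_left.2 fun _ hu hv => huv (IsGreatest.unique hu hv)

/-- The vertices `v` such that no ancestor `u` of `v` is tame, in the sense that `T` can be joined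
up inside the subtree `Ici u`, possibly after toggling `u`. -/
def wild (G : SimpleGraph V) (T : Set V) : Set V := {v | ∀ u ≤ v, ¬ TameAt G T (Ici u) u}

lemma isLowerSet_wild : IsLowerSet (wild G T) :=
  fun _ _ hle h u hu => h u (hu.trans hle)

end Block

section RootedTree

open Order
open scoped symmDiff

variable [PartialOrder V] [PredOrder V] {v x y : V}

/-- The graph formed by the edges from the vertices of `X` to their predecessors. For a rooted tree,
encoded by the order in which `u ≤ v` means that `u` is an ancestor of `v`, these are the edges from
the vertices of `X` to their parents. -/
def predGraph (X : Set V) : SimpleGraph V := ⨆ x ∈ X, edge (pred x) x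

lemma predGraph_adj {X : Set V} :
    (predGraph X).Adj x y ↔ (x ∈ X ∧ pred x = y ∨ y ∈ X ∧ pred y = x) ∧ x ≠ y := by
  simp only [predGraph, iSup_adj, edge_adj]
  grind

lemma predGraph_mono {X Y : Set V} (h : X ⊆ Y) : predGraph X ≤ predGraph Y :=
  biSup_mono h

lemma disjoint_predGraph {X Y : Set V} (h : Disjoint X Y) :
    Disjoint (predGraph X) (predGraph Y) := by
  refine SimpleGraph.disjoint_left.2 fun x y hX hY => ?_
  have := Set.disjoint_left.1 h
  have hle := pred_le x
  have hle' := pred_le y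
  rw [predGraph_adj] at hX hY
  grind

lemma predGraph_reachable [WellFoundedLT V] (h : x ≤ y) : (predGraph (Ioc x y)).Reachable x y := by
  induction y using WellFoundedLT.induction with
  | ind y ih =>
    rcases h.eq_or_lt with rfl | hlt
    · exact .rfl
    · have hpred : pred y < y := pred_lt_of_not_isMin (not_isMin_of_lt hlt)
      refine ((ih _ hpred (le_pred_of_lt hlt)).mono
        (predGraph_mono (Ioc_subset_Ioc_right hpred.le))).trans (Adj.reachable ?_)
      exact predGraph_adj.2 ⟨.inr ⟨⟨hlt, le_rfl⟩, rfl⟩, hpred.ne⟩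

lemma hasTJoin_predGraph [WellFoundedLT V] (hT : ∀ t ∈ T, ∃ t' ∈ T, t < t') (hTS : T ⊆ S)
    (hS : IsLowerSet S) : (predGraph S).HasTJoin T := by
  choose f hf hmin using fun t : T => exists_minimal_of_wellFoundedLT
    (fun t' : T => t < t') (let ⟨t', ht', hlt⟩ := hT t t.2; ⟨⟨t', ht'⟩, hlt⟩)
  obtain ⟨M, hM⟩ := exists_image_eq_compl hf
  have hdisj : Pairwise (Disjoint on fun t : T => Ioc (t : V) (f t)) := by
    intro s t hst
    refine Set.disjoint_left.2 fun x ⟨hsx, hxs⟩ ⟨htx, hxt⟩ => ?_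
    rcases le_total_of_directed hsx.le htx.le with hle | hle
    · exact (hsx.trans_le hxt).not_ge
        (hmin t (hle.lt_of_ne' (Subtype.coe_injective.ne hst)) (hsx.trans_le hxt).le)
    · exact (htx.trans_le hxs).not_ge
        (hmin s (hle.lt_of_ne (Subtype.coe_injective.ne hst)) (htx.trans_le hxs).le)
  have hf_inj : Injective f := fun s t hst => by
    by_contra hne
    exact Set.disjoint_left.1 (hdisj hne) (right_mem_Ioc.2 (hf s)) (hst ▸ right_mem_Ioc.2 (hf t))
  have hrange : range (Sum.elim (fun i : M => (i : T)) (fun i : M => f i)) = univ := by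
    rw [Sum.elim_range, Subtype.range_coe, ← image_eq_range, hM, union_compl_self]
  have hcoe : Sum.elim (fun i : M => ((i : T) : V)) (fun i : M => (f i : V)) =
      Subtype.val ∘ Sum.elim (fun i : M => (i : T)) (fun i : M => f i) :=
    (Sum.comp_elim ..).symm
  refine IsLinkage.hasTJoin (ι := M) (a := fun i => (i : T)) (b := fun i => f i)
    (H := fun i => predGraph (Ioc (i : T) (f i)))
    ⟨?_, ?_, fun i j hij => ?_, fun i => ?_, fun i => predGraph_reachable (hf i).le⟩
  · rw [hcoe]
    refine Subtype.val_injective.comp (Subtype.val_injective.sumElim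
      (hf_inj.comp Subtype.val_injective) fun i j hij => ?_)
    exact (hM ▸ mem_image_of_mem f j.2 : f j ∈ Mᶜ) (hij ▸ i.2)
  · rw [hcoe, range_comp, hrange, image_univ, Subtype.range_coe]
  · exact disjoint_predGraph (hdisj (Subtype.val_injective.ne hij))
  · exact predGraph_mono fun x hx => hS hx.2 (hTS (f i).2)

lemma predGraph_le (hG : ∀ v, ¬ IsMin v → G.Adj (pred v) v) (X : Set V) : predGraph X ≤ G := by
  refine iSup₂_le fun x _ => (edge_le_iff _).2 ?_
  by_cases hx : IsMin x
  · exact .inl hx.pred_eq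
  · exact .inr (hG x hx)

lemma disjoint_within_block_predGraph : Disjoint (within G (block S v)) (predGraph S) := by
  refine SimpleGraph.disjoint_left.2 fun x y hxy hpred => ?_
  obtain ⟨-, hx, hy⟩ := within_adj.1 hxy
  have eq_of_mem {x : V} (hx : x ∈ block S v) (hxS : x ∈ S) : x = v :=
    (hx.2 ⟨hxS, le_rfl⟩).antisymm hx.1.2
  obtain ⟨⟨hxS, rfl⟩ | ⟨hyS, rfl⟩, hne⟩ := predGraph_adj.1 hpred
  · exact hne ((eq_of_mem hx hxS).trans_le hy.1.2 |>.antisymm (pred_le x))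
  · exact hne ((pred_le y).antisymm ((eq_of_mem hy hyS).trans_le hx.1.2))

lemma exists_isGreatest_inter_Iic [WellFoundedLT V] (hv : v ∈ S) (hvx : v ≤ x) :
    ∃ u, IsGreatest (S ∩ Iic x) u := by
  induction x using WellFoundedLT.induction with
  | ind x ih =>
    by_cases hx : x ∈ S
    · exact ⟨x, mem_block_self hx⟩
    · have hlt : v < x := hvx.lt_of_ne (ne_of_mem_of_not_mem hv hx)
      obtain ⟨u, hu, hmax⟩ := ih _ (pred_lt_of_not_isMin (not_isMin_of_lt hlt)) (le_pred_of_lt hlt)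
      exact ⟨u, ⟨hu.1, hu.2.trans (pred_le x)⟩, fun w hw =>
        hmax ⟨hw.1, le_pred_of_lt (hw.2.lt_of_ne (ne_of_mem_of_not_mem hw.1 hx))⟩⟩

lemma biUnion_block [WellFoundedLT V] (hv : v ∈ S) : ⋃ u ∈ S ∩ Ici v, block S u = Ici v := by
  ext x
  refine mem_iUnion₂.trans ⟨fun ⟨u, hu, hxu⟩ => hu.2.trans hxu.1.2, fun hvx => ?_⟩
  obtain ⟨u, hu⟩ := exists_isGreatest_inter_Iic hv hvx
  exact ⟨u, ⟨hu.1.1, hu.2 ⟨hv, hvx⟩⟩, hu⟩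

lemma block_eq_insert [WellFoundedLT V] (hS : IsLowerSet S) (hv : v ∈ S) :
    block S v = insert v (⋃ c ∈ {c | v ⋖ c ∧ c ∉ S}, Ici c) := by
  ext x
  rw [mem_insert_iff, mem_iUnion₂]
  constructor
  · intro hx
    refine hx.1.2.eq_or_lt.imp Eq.symm fun hvx => ?_
    obtain ⟨c, hvc, hcx⟩ := exists_covBy_le_of_lt hvx
    exact ⟨c, ⟨hvc, fun hc => hvc.lt.not_ge (hx.2 ⟨hc, hcx⟩)⟩, hcx⟩
  · rintro (rfl | ⟨c, ⟨hvc, hc⟩, hcx⟩)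
    · exact mem_block_self hv
    · refine ⟨⟨hv, hvc.le.trans hcx⟩, fun w ⟨hwS, hwx⟩ => ?_⟩
      rcases le_total_of_directed hwx hcx with h | h
      · exact absurd (hS h hwS) hc
      · have hlt : w < c := h.lt_of_ne (ne_of_mem_of_not_mem hwS hc)
        exact hvc.pred_eq ▸ le_pred_of_lt hlt

lemma tameAt_block_wild [WellFoundedLT V] (hG : ∀ v, ¬ IsMin v → G.Adj (pred v) v)
    (hv : v ∈ wild G T) : TameAt G T (block (wild G T) v) v := by
  rw [block_eq_insert isLowerSet_wild hv]
  refine tameAt_insert_biUnion ?_ (fun c hc hcv => hc.1.lt.not_ge hcv) (fun c _ => le_rfl)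
    (fun c hc => ?_) (fun c hc => ?_)
  · refine fun c hc d hd hcd => Set.disjoint_left.2 fun x hcx hdx => hcd ?_
    rcases le_total_of_directed hcx hdx with h | h
    · exact (h.eq_of_not_lt (hc.1.2 hd.1.lt)).symm
    · exact h.eq_of_not_lt (hd.1.2 hc.1.lt)
  · exact hc.1.pred_eq ▸ hG c (not_isMin_of_lt hc.1.lt)
  · by_contra hbad
    refine hc.2 fun u hu => ?_
    rcases hu.eq_or_lt with rfl | hlt
    · exact hbad
    · exact hv u (hc.1.pred_eq ▸ le_pred_of_lt hlt)

lemma exists_gt_not_joinableOn_block [WellFoundedLT V]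
    (hG : ∀ v, ¬ IsMin v → G.Adj (pred v) v) (hv : v ∈ wild G T) :
    ∃ t ∈ wild G T, ¬ JoinableOn G T (block (wild G T) t) ∧ v < t := by
  by_contra! h
  have joinable_Ici {T' : Set V} (hT' : ∀ X, v ∉ X → T' ∩ X = T ∩ X)
      (hjoin : JoinableOn G T' (block (wild G T) v)) : JoinableOn G T' (Ici v) := by
    rw [← biUnion_block hv]
    refine joinableOn_biUnion (pairwiseDisjoint_block _) fun u ⟨hu, hvu⟩ => ?_
    rcases eq_or_lt_of_le hvu with rfl | hlt
    · exact hjoin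
    · refine (joinableOn_congr (hT' _ fun hvu' => hlt.not_ge hvu'.1.2)).2 ?_
      exact not_not.1 fun hbad => h u hu hbad hlt
  refine hv v le_rfl ((tameAt_block_wild hG hv).imp (joinable_Ici fun _ _ => rfl)
    (joinable_Ici fun X hX => ?_))
  ext; grind

theorem hasTJoin_or_hasTJoin_symmDiff_bot [OrderBot V] [WellFoundedLT V]
    (hG : ∀ v, ¬ IsMin v → G.Adj (pred v) v) : G.HasTJoin T ∨ G.HasTJoin (T ∆ {⊥}) := by
  by_cases hbot : TameAt G T (Ici ⊥) ⊥
  · simpa only [TameAt, Ici_bot, joinableOn_univ] using hbot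
  · have hbot_mem : ⊥ ∈ wild G T := fun u hu => le_bot_iff.1 hu ▸ hbot
    have hcover : ⋃ u ∈ wild G T, block (wild G T) u = univ := by
      simpa only [Ici_bot, inter_univ] using biUnion_block hbot_mem
    have hpath : (predGraph (wild G T)).HasTJoin
        {t ∈ wild G T | ¬ JoinableOn G T (block (wild G T) t)} :=
      hasTJoin_predGraph (fun t ht => by
        simpa only [mem_sep_iff, and_assoc] using exists_gt_not_joinableOn_block hG ht.1)
        (sep_subset ..) isLowerSet_wild
    left
    rw [← joinableOn_univ, ← hcover]
    refine joinableOn_biUnion_of_hasTJoin (pairwiseDisjoint_block _) (fun u => mem_block_self) ?_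
      (fun _ _ => disjoint_within_block_predGraph) (sep_subset ..) hpath
      (fun u hu => (tameAt_block_wild hG hu.1).resolve_left hu.2)
      (fun u hu hgood => not_not.1 fun hbad => hgood ⟨hu, hbad⟩)
    rw [hcover, within, spanningCoe_induce_univ]
    exact predGraph_le hG _

end RootedTree

section Connected

open Order
open scoped symmDiff

variable {D : Set V} {r v : V}

lemma iterate_eq_or_lt {p : V → V} {level : V → ℕ} (hr : p r = r)
    (hlt : ∀ v, v ≠ r → level (p v) < level v) (n : ℕ) (v : V) :
    p^[n] v = v ∨ level (p^[n] v) < level v := by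
  induction n with
  | zero => exact .inl rfl
  | succ n ih =>
    rw [iterate_succ_apply']
    by_cases hv : p^[n] v = r
    · rwa [hv, hr, ← hv]
    · exact .inr (ih.elim (fun h => (hlt _ hv).trans_eq (congrArg level h)) (hlt _ hv).trans)

lemma exists_iterate_eq {p : V → V} {level : V → ℕ}
    (hlt : ∀ v, v ≠ r → level (p v) < level v) (v : V) : ∃ n, p^[n] v = r := by
  induction h : level v using Nat.strong_induction_on generalizing v with
  | h k ih =>
    by_cases hv : v = r
    · exact ⟨0, hv⟩
    · obtain ⟨n, hn⟩ := ih _ (h ▸ hlt v hv) _ rfl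
      exact ⟨n + 1, hn⟩

lemma exists_predOrder_of_parent {p : V → V} {level : V → ℕ} (hr : p r = r)
    (hlt : ∀ v, v ≠ r → level (p v) < level v) :
    ∃ (_ : PartialOrder V) (_ : OrderBot V) (_ : PredOrder V) (_ : WellFoundedLT V),
      ⊥ = r ∧ ∀ v : V, pred v = p v := by
  let _ : LE V := ⟨fun x y => ∃ n, p^[n] y = x⟩
  have eq_or_lt {x y : V} : x ≤ y → x = y ∨ level x < level y := by
    rintro ⟨n, rfl⟩
    exact iterate_eq_or_lt hr hlt n y
  let _ : PartialOrder V :=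
    { le_refl := fun _ => ⟨0, rfl⟩
      le_trans := fun _ _ z ⟨m, hm⟩ ⟨n, hn⟩ => ⟨m + n, by rw [iterate_add_apply, hn, hm]⟩
      le_antisymm := fun x y hxy hyx => (eq_or_lt hxy).resolve_right fun h =>
        (eq_or_lt hyx).elim (fun h' => h.ne (congrArg level h'.symm)) h.not_gt }
  have : WellFoundedLT V :=
    StrictMono.wellFoundedLT (f := level) fun _ _ h => (eq_or_lt h.le).resolve_left h.ne
  let _ : OrderBot V :=
    { bot := r
      bot_le := exists_iterate_eq hlt }
  let _ : PredOrder V :=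
    { pred := p
      pred_le := fun _ => ⟨1, rfl⟩
      min_of_le_pred := fun {x} hx => by
        by_contra hmin
        have hxr : x ≠ r := fun h => hmin (h ▸ isMin_bot)
        exact (eq_or_lt hx).elim (fun h => (hlt x hxr).ne (congrArg level h.symm))
          (hlt x hxr).not_gt
      le_pred_of_lt := fun {x y} hxy => by
        obtain ⟨_ | n, hn⟩ := hxy.le
        · exact absurd hn.symm hxy.ne
        · exact ⟨n, hn⟩ }
  exact ⟨inferInstance, inferInstance, inferInstance, this, rfl, fun _ => rfl⟩

lemma exists_adj_dist_lt (hG : G.Connected) (hv : v ≠ r) :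
    ∃ u, G.Adj u v ∧ G.dist u r < G.dist v r := by
  obtain ⟨w, hw⟩ := hG.exists_walk_length_eq_dist v r
  cases w with
  | nil => exact absurd rfl hv
  | cons hadj w => exact ⟨_, hadj.symm, hw ▸ Nat.lt_succ_of_le (dist_le w)⟩

lemma exists_predOrder_adj_pred (hG : G.Connected) (r : V) :
    ∃ (_ : PartialOrder V) (_ : OrderBot V) (_ : PredOrder V) (_ : WellFoundedLT V),
      ⊥ = r ∧ ∀ v : V, ¬ IsMin v → G.Adj (pred v) v := by
  classical
  choose! parent hadj hlt using fun v (hv : v ≠ r) => exists_adj_dist_lt hG hv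
  obtain ⟨_, _, _, _, rfl, hpred⟩ := exists_predOrder_of_parent (r := r)
    (p := update parent r r) (level := fun v => G.dist v r) (update_self r r parent)
    fun v hv => by simpa only [update_of_ne hv] using hlt v hv
  refine ⟨inferInstance, inferInstance, inferInstance, ‹_›, rfl, fun v hv => ?_⟩
  have hv : v ≠ ⊥ := fun h => hv (h ▸ isMin_bot)
  rw [hpred, update_of_ne hv]
  exact hadj v hv

theorem hasTJoin_or_hasTJoin_symmDiff_singleton (hG : G.Connected) (T : Set V) (r : V) :
    G.HasTJoin T ∨ G.HasTJoin (T ∆ {r}) := by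
  obtain ⟨_, _, _, _, rfl, hadj⟩ := exists_predOrder_adj_pred hG r
  exact hasTJoin_or_hasTJoin_symmDiff_bot hadj

lemma hasTJoin_symmDiff_of_finite (hG : G.Preconnected) (hD : D.Finite) (hT : G.HasTJoin T) :
    (Even D.ncard → G.HasTJoin (T ∆ D)) ∧ (¬ Even D.ncard → ∀ r, G.HasTJoin (T ∆ D ∆ {r})) := by
  induction D, hD using Set.Finite.induction_on with
  | empty => exact ⟨fun _ => by rwa [← bot_eq_empty, symmDiff_bot], fun h => by simp at h⟩
  | @insert a D ha hD ih =>
    have hinsert : T ∆ insert a D = T ∆ D ∆ {a} := by ext; grind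
    rw [ncard_insert_of_notMem ha hD, Nat.even_add_one, not_not, hinsert]
    exact ⟨fun h => ih.2 h a, fun h r => hasTJoin_symmDiff_of_reachable (ih.1 h) (hG a r)⟩

end Connected

end TJoin

/-- If `T △ T'` is finite and the connected graph `G` has neither a `T`-join nor a
`T'`-join, then `|T △ T'|` is even. -/
theorem even_symmDiff_of_not_hasTJoin {V : Type*} (G : SimpleGraph V)
    (hG : G.Connected) (T T' : Set V) (hfin : (symmDiff T T').Finite)
    (hT : ¬ G.HasTJoin T) (hT' : ¬ G.HasTJoin T') :
    Even (symmDiff T T').ncard := by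
  by_contra hodd
  obtain ⟨r⟩ := hG.nonempty
  have hjoin : G.HasTJoin (symmDiff T {r}) :=
    (TJoin.hasTJoin_or_hasTJoin_symmDiff_singleton hG T r).resolve_left hT
  have htoggle := (TJoin.hasTJoin_symmDiff_of_finite hG.preconnected hfin hjoin).2 hodd r
  have hT'_eq : symmDiff (symmDiff (symmDiff T {r}) (symmDiff T T')) {r} = T' := by
    rw [symmDiff_symmDiff_symmDiff_comm, symmDiff_self, bot_symmDiff, symmDiff_comm {r} T',
      symmDiff_symmDiff_cancel_right]
  exact hT' (hT'_eq ▸ htoggle)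
end
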